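/- arXiv:1801.10051 — 2 statements merged into one kernel-verified Lean document; each statement's English description precedes it below -/
import Mathlib

section
/- Parseval relation for the fractional Hankel transform: let ν ≥ −1/2, μ, θ ∈ ℝ with 0 < θ < π, θ ≠ π/2 allowed, sin θ ≠ 0. For f, g in a suitable dense class (e.g., smooth compactly supported functions on (0,∞)), ∫₀^∞ f(t) conj(g(t)) t^{1+2μ} dt = ∫₀^∞ (H^θ_{ν,μ}f)(ω) conj((H^θ_{ν,μ}g)(ω)) ω^{1+2μ} dω, where (H^θ_{ν,μ}f)(ω) = ∫₀^∞ K^θ(t,ω) f(t) dt with kernel K^θ(t,ω) = C_{ν,μ,θ} e^{(i/2)(t²+ω²)cot θ} (tω csc θ)^{−μ} J_ν(tω csc θ) t^{1+2μ} and C_{ν,μ,θ} = e^{i(1+ν)(θ−π/2)}/(sin θ)^{1+μ}. -/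
open MeasureTheory Complex

/-- Bessel function of the first kind of real order `ν`. -/
noncomputable def besselJ (ν x : ℝ) : ℝ :=
  ∑' m : ℕ, ((-1 : ℝ) ^ m / (m.factorial * Real.Gamma (m + ν + 1))) *
    (x / 2) ^ ((2 * m : ℝ) + ν)

/-- The constant `C_{ν,μ,θ} = e^{i(1+ν)(θ−π/2)}/(sin θ)^{1+μ}`. -/
noncomputable def fracHankelConst (ν μ θ : ℝ) : ℂ :=
  Complex.exp (I * ((1 + ν : ℝ) : ℂ) * ((θ - Real.pi / 2 : ℝ) : ℂ)) /
    ((Real.sin θ ^ (1 + μ) : ℝ) : ℂ)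

/-- The kernel `K^θ(t,ω)` of the fractional Hankel transform. -/
noncomputable def fracHankelKernel (ν μ θ : ℝ) (t ω : ℝ) : ℂ :=
  fracHankelConst ν μ θ *
    Complex.exp ((I / 2) * ((t : ℂ) ^ 2 + (ω : ℂ) ^ 2) * (Real.cot θ : ℂ)) *
    (((t * ω * (Real.sin θ)⁻¹) ^ (-μ) : ℝ) : ℂ) *
    ((besselJ ν (t * ω * (Real.sin θ)⁻¹) : ℝ) : ℂ) *
    ((t ^ (1 + 2 * μ) : ℝ) : ℂ)

/-- The fractional Hankel transform `H^θ_{ν,μ}`. -/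
noncomputable def fracHankel (ν μ θ : ℝ) (f : ℝ → ℂ) (ω : ℝ) : ℂ :=
  ∫ t in Set.Ioi (0 : ℝ), fracHankelKernel ν μ θ t ω * f t


/-- Abstract extension of an isometry given on a dense span. -/
theorem hk_exists_isometry {H ι : Type*} [NormedAddCommGroup H] [InnerProductSpace ℂ H]
    [CompleteSpace H] (E E' : ι → H)
    (hG : ∀ p q, inner ℂ (E p) (E q) = inner ℂ (E' p) (E' q))
    (hS : ∀ p q, inner ℂ (E' p) (E q) = inner ℂ (E p) (E' q))
    (hd : (Submodule.span ℂ (Set.range E)).topologicalClosure = ⊤) :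
    ∃ U : H → H, (∀ u v, inner ℂ (U u) (U v) = inner ℂ u v) ∧
      ∀ u q, inner ℂ (U u) (E q) = inner ℂ u (E' q) := by
  classical
  set V := Finsupp.linearCombination ℂ E with hV
  set W := Finsupp.linearCombination ℂ E' with hW
  have hVW : ∀ c d, inner ℂ (V c) (V d) = inner ℂ (W c) (W d) := by
    intro c d
    simp only [hV, hW, Finsupp.linearCombination_apply, Finsupp.sum, sum_inner, inner_sum,
      inner_smul_left, inner_smul_right, hG]
  have hVW' : ∀ c q, inner ℂ (W c) (E q) = inner ℂ (V c) (E' q) := by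
    intro c q
    simp only [hV, hW, Finsupp.linearCombination_apply, Finsupp.sum, sum_inner,
      inner_smul_left, hS]
  have hn : ∀ c, ‖W c‖ = ‖V c‖ := by
    intro c
    have := hVW c c
    rw [inner_self_eq_norm_sq_to_K, inner_self_eq_norm_sq_to_K] at this
    have h2 : ‖V c‖ ^ 2 = ‖W c‖ ^ 2 := by exact_mod_cast this
    exact ((sq_eq_sq₀ (norm_nonneg _) (norm_nonneg _)).1 h2).symm
  have key : ∀ u : H, ∃ (w : H) (c : ℕ → ι →₀ ℂ),
      Filter.Tendsto (fun n => V (c n)) Filter.atTop (nhds u) ∧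
      Filter.Tendsto (fun n => W (c n)) Filter.atTop (nhds w) := by
    intro u
    have hu : u ∈ closure (Set.range V) := by
      have : u ∈ (Submodule.span ℂ (Set.range E)).topologicalClosure := by rw [hd]; trivial
      have h2 : u ∈ closure ((Submodule.span ℂ (Set.range E) : Submodule ℂ H) : Set H) := this
      rw [← Finsupp.range_linearCombination, LinearMap.coe_range] at h2
      exact h2
    obtain ⟨x, hx, hxu⟩ := mem_closure_iff_seq_limit.1 hu
    choose c hc using hx
    have hVu : Filter.Tendsto (fun n => V (c n)) Filter.atTop (nhds u) := by
      simpa [hc] using hxu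
    have hcau : CauchySeq (fun n => W (c n)) := by
      have h1 := hVu.cauchySeq
      rw [Metric.cauchySeq_iff] at h1 ⊢
      intro ε hε
      obtain ⟨N, hN⟩ := h1 ε hε
      refine ⟨N, fun m hm n hn' => ?_⟩
      have := hN m hm n hn'
      rwa [dist_eq_norm, ← map_sub, ← hn, map_sub, ← dist_eq_norm] at this
    obtain ⟨w, hw⟩ := cauchySeq_tendsto_of_complete hcau
    exact ⟨w, c, hVu, hw⟩
  choose U c h1 h2 using key
  refine ⟨U, fun u v => ?_, fun u q => ?_⟩
  · have a := (h2 u).inner (𝕜 := ℂ) (h2 v)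
    have b := (h1 u).inner (𝕜 := ℂ) (h1 v)
    simp only [hVW] at b
    exact tendsto_nhds_unique a b
  · have a := (h2 u).inner (𝕜 := ℂ) (tendsto_const_nhds (x := E q))
    have b := (h1 u).inner (𝕜 := ℂ) (tendsto_const_nhds (x := E' q))
    simp only [hVW'] at a
    exact tendsto_nhds_unique a b

/-- Uniqueness: vanishing of the Gaussian moments. -/
theorem hk_unique (h : ℝ → ℂ)
    (hi : IntegrableOn (fun x => h x * (Real.exp (-(x ^ 2 / 2)) : ℂ)) (Set.Ioi 0))
    (h0 : ∀ n : ℕ, ∫ x in Set.Ioi (0 : ℝ),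
      h x * (Real.exp (-((n + 1 : ℝ) * x ^ 2 / 2)) : ℂ) = 0) :
    ∀ᵐ x ∂(volume.restrict (Set.Ioi (0 : ℝ))), h x = 0 := by
  set K : ℝ → ℂ := fun x => h x * (Real.exp (-(x ^ 2 / 2)) : ℂ) with hK
  set s : ℝ → ℝ := fun x => Real.exp (-(x ^ 2 / 2)) with hs
  have hsc : Continuous s := by simp only [hs]; fun_prop
  have hs1 : ∀ x, s x ∈ Set.Icc (0 : ℝ) 1 := fun x =>
    ⟨(Real.exp_pos _).le, Real.exp_le_one_iff.2 (by have := sq_nonneg x; linarith)⟩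
  have hint : ∀ P : Polynomial ℝ,
      IntegrableOn (fun x => ((P.eval (s x) : ℝ) : ℂ) * K x) (Set.Ioi 0) := by
    intro P
    obtain ⟨C, hC⟩ := (isCompact_Icc (a := (0 : ℝ)) (b := 1)).exists_bound_of_continuousOn
      (f := fun y => P.eval y) P.continuous.continuousOn
    refine Integrable.bdd_mul (c := C) hi ?_ ?_
    · exact (Continuous.aestronglyMeasurable (by fun_prop))
    · exact Filter.Eventually.of_forall fun x => by
        simpa using hC _ (hs1 x)
  have hmono : ∀ n : ℕ, ∫ x in Set.Ioi (0 : ℝ), ((s x ^ n : ℝ) : ℂ) * K x = 0 := by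
    intro n
    rw [← h0 n]
    congr 1
    ext x
    have : Real.exp (-((n + 1 : ℝ) * x ^ 2 / 2)) = s x ^ n * Real.exp (-(x ^ 2 / 2)) := by
      simp only [hs]
      rw [← Real.exp_nat_mul, ← Real.exp_add]; congr 1; ring
    rw [this]; simp only [hK]; push_cast; ring
  have hpoly : ∀ P : Polynomial ℝ,
      ∫ x in Set.Ioi (0 : ℝ), ((P.eval (s x) : ℝ) : ℂ) * K x = 0 := by
    intro P
    induction P using Polynomial.induction_on' with
    | add p q hp hq =>
      have := integral_add (hint p) (hint q)
      rw [hp, hq, add_zero] at this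
      rw [← this]; congr 1; ext x; simp only [Polynomial.eval_add]; push_cast; ring
    | monomial n a =>
      have := integral_const_mul (μ := volume.restrict (Set.Ioi (0 : ℝ))) (a : ℂ)
        (fun x => ((s x ^ n : ℝ) : ℂ) * K x)
      rw [hmono, mul_zero] at this
      rw [← this]; congr 1; ext x; simp only [Polynomial.eval_monomial]; push_cast; ring
  have hK0 : ∀ᵐ x ∂volume, x ∈ Set.Ioi (0 : ℝ) → K x = 0 := by
    refine IsOpen.ae_eq_zero_of_integral_contDiff_smul_eq_zero isOpen_Ioi
      hi.locallyIntegrableOn ?_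
    intro k hkd hkc hks
    have hkcont : Continuous k := hkd.continuous
    have hk0 : ∀ x, x ∉ Set.Ioi (0 : ℝ) → k x = 0 := fun x hx =>
      image_eq_zero_of_notMem_tsupport fun hh => hx (hks hh)
    have hres : ∫ x, k x • K x = ∫ x in Set.Ioi (0 : ℝ), (k x : ℂ) * K x := by
      rw [setIntegral_eq_integral_of_forall_compl_eq_zero]
      · simp
      · intro x hx; simp [hk0 x hx]
    rw [hres]
    -- the function on [0,1]
    set c : ℝ → ℝ := fun y => k (Real.sqrt (-2 * Real.log y)) with hc
    have hcs : ∀ x, 0 < x → c (s x) = k x := by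
      intro x hx
      simp only [hc, hs, Real.log_exp]
      rw [show -2 * -(x ^ 2 / 2) = x ^ 2 by ring, Real.sqrt_sq hx.le]
    have hcc : ContinuousOn c (Set.Icc 0 1) := by
      intro y hy
      rcases eq_or_lt_of_le hy.1 with h | h
      · obtain ⟨R, hR⟩ := hkc.isCompact.isBounded.subset_ball 0
        subst h
        apply ContinuousAt.continuousWithinAt
        have hz : c =ᶠ[nhds 0] fun _ => 0 := by
          have : Set.Ioo (-Real.exp (-(R ^ 2 / 2))) (Real.exp (-(R ^ 2 / 2))) ∈ nhds (0 : ℝ) :=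
            Ioo_mem_nhds (by simpa using Real.exp_pos _) (Real.exp_pos _)
          filter_upwards [this] with z hz
          rcases eq_or_ne z 0 with h0 | h0
          · subst h0; simp [hc, hk0 0]
          · simp only [hc]
            apply image_eq_zero_of_notMem_tsupport
            intro hmem
            have h3 := hR hmem
            rw [mem_ball_zero_iff, Real.norm_eq_abs, abs_of_nonneg (Real.sqrt_nonneg _)] at h3
            have hl : Real.log z < -(R ^ 2 / 2) := by
              rw [← Real.log_abs, Real.log_lt_iff_lt_exp (abs_pos.2 h0), abs_lt]
              exact hz
            have h4 : R ^ 2 < -2 * Real.log z := by linarith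
            have h5 := Real.lt_sqrt_of_sq_lt h4
            linarith
        exact (continuousAt_const.congr hz.symm)
      · apply ContinuousAt.continuousWithinAt
        simp only [hc]
        have := Real.continuousAt_log h.ne'
        fun_prop
    obtain ⟨M, hM⟩ : ∃ M, M = ∫ x in Set.Ioi (0 : ℝ), ‖K x‖ := ⟨_, rfl⟩
    have hM0 : 0 ≤ M := by rw [hM]; exact integral_nonneg fun _ => norm_nonneg _
    have hbound : ∀ ε > 0, ‖∫ x in Set.Ioi (0 : ℝ), (k x : ℂ) * K x‖ ≤ ε * M := by
      intro ε hε
      obtain ⟨P, hP⟩ := exists_polynomial_near_of_continuousOn 0 1 c hcc ε hε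
      have hkint : IntegrableOn (fun x => (k x : ℂ) * K x) (Set.Ioi 0) := by
        obtain ⟨C, hC⟩ := hkc.exists_bound_of_continuous hkcont
        refine Integrable.bdd_mul (c := C) hi ?_ ?_
        · exact (Continuous.aestronglyMeasurable (by fun_prop))
        · exact Filter.Eventually.of_forall fun x => by simpa using hC x
      have h1 := integral_sub hkint (hint P)
      rw [hpoly P, sub_zero] at h1
      rw [← h1, hM, ← integral_const_mul]
      refine norm_integral_le_of_norm_le (hi.norm.const_mul ε) ?_
      filter_upwards [ae_restrict_mem measurableSet_Ioi] with x hx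
      rw [← sub_mul, norm_mul]
      gcongr
      rw [← hcs x hx, ← ofReal_sub, norm_real, Real.norm_eq_abs, abs_sub_comm]
      exact (hP _ (hs1 x)).le
    rw [← norm_le_zero_iff]
    refine le_of_forall_pos_le_add fun ε hε => ?_
    have h1 := hbound (ε / (M + 1)) (by positivity)
    refine h1.trans ?_
    rw [zero_add, div_mul_eq_mul_div, div_le_iff₀ (by positivity)]
    nlinarith
  rw [ae_restrict_iff' measurableSet_Ioi]
  filter_upwards [hK0] with x hx hx0
  have := hx hx0
  simp only [hK] at this
  rcases mul_eq_zero.1 this with h | h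
  · exact h
  · exact absurd h (by exact_mod_cast (Real.exp_pos _).ne')

/-- Coefficients of the entire part of the Bessel function. -/
noncomputable def hkd (ν : ℝ) (m : ℕ) : ℝ :=
  (-1 : ℝ) ^ m / (m.factorial * Real.Gamma (m + ν + 1) * 4 ^ m) * 2 ^ (-ν)

/-- The entire part of the Bessel function. -/
noncomputable def hkE (ν y : ℝ) : ℝ := ∑' m : ℕ, hkd ν m * y ^ (2 * m)

/-- The symmetric Hankel kernel. -/
noncomputable def hkk (ν y : ℝ) : ℝ := y ^ (ν + 1 / 2) * hkE ν y

/-- The Gaussians. -/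
noncomputable def hke (ν q t : ℝ) : ℝ := t ^ (ν + 1 / 2) * Real.exp (-(q * t ^ 2 / 2))

theorem hk_bessel (ν y : ℝ) (hy : 0 < y) : besselJ ν y = y ^ ν * hkE ν y := by
  unfold besselJ hkE
  rw [← tsum_mul_left]
  congr 1
  ext m
  unfold hkd
  have h1 : (y / 2) ^ ((2 * m : ℝ) + ν) = y ^ ν * y ^ (2 * m) * (2 ^ (-ν) / 4 ^ m) := by
    rw [Real.rpow_add (by positivity), Real.div_rpow hy.le (by norm_num),
      Real.div_rpow hy.le (by norm_num), Real.rpow_neg (by norm_num)]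
    have h2 : ((2 : ℝ) ^ (2 * m : ℝ)) = 4 ^ m := by
      rw [show (2 * m : ℝ) = ((2 * m : ℕ) : ℝ) by push_cast; ring, Real.rpow_natCast, pow_mul]
      norm_num
    have h3 : (y ^ (2 * m : ℝ)) = y ^ (2 * m) := by
      rw [show (2 * m : ℝ) = ((2 * m : ℕ) : ℝ) by push_cast; ring, Real.rpow_natCast]
    rw [h2, h3]
    field_simp
  rw [h1, mul_assoc (m.factorial : ℝ), ← mul_assoc (m.factorial : ℝ), ← div_div]
  ring

theorem hk_gamma_lower (ν : ℝ) (hν : -(1 / 2 : ℝ) ≤ ν) (m : ℕ) :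
    Real.Gamma (ν + 1) * ((2 * m).factorial : ℝ) ≤
      m.factorial * Real.Gamma (m + ν + 1) * 4 ^ m := by
  induction m with
  | zero => simp
  | succ m ih =>
    have h0 : (0 : ℝ) ≤ m := Nat.cast_nonneg m
    have hG : 0 < Real.Gamma (m + ν + 1) := Real.Gamma_pos_of_pos (by linarith)
    have h1 : Real.Gamma ((m + 1 : ℕ) + ν + 1) = (m + ν + 1) * Real.Gamma (m + ν + 1) := by
      rw [← Real.Gamma_add_one (by linarith)]; congr 1; push_cast; ring
    rw [h1]
    have h2 : ((2 * (m + 1)).factorial : ℝ) =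
        (2 * m + 2) * ((2 * m + 1) * ((2 * m).factorial : ℝ)) := by
      rw [show 2 * (m + 1) = 2 * m + 1 + 1 by ring, Nat.factorial_succ, Nat.factorial_succ]
      push_cast; ring
    rw [h2, Nat.factorial_succ]
    push_cast
    calc _ = (2 * m + 2) * (2 * m + 1) * (Real.Gamma (ν + 1) * ((2 * m).factorial : ℝ)) := by ring
      _ ≤ (2 * m + 2) * (2 * (m + ν + 1)) * (m.factorial * Real.Gamma (m + ν + 1) * 4 ^ m) := by
        have hG' : 0 < Real.Gamma (ν + 1) := Real.Gamma_pos_of_pos (by linarith)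
        have h3 : (2 * m + 1 : ℝ) ≤ 2 * (m + ν + 1) := by linarith
        have h4 : (0 : ℝ) ≤ 2 * (m + ν + 1) := by linarith
        exact mul_le_mul (mul_le_mul_of_nonneg_left h3 (by positivity)) ih (by positivity)
          (by positivity)
      _ = _ := by ring

/-- Bound constant. -/
noncomputable def hkD (ν : ℝ) : ℝ := 2 ^ (-ν) / Real.Gamma (ν + 1)

theorem hkD_pos (ν : ℝ) (hν : -(1 / 2 : ℝ) ≤ ν) : 0 < hkD ν := by
  have := Real.Gamma_pos_of_pos (s := ν + 1) (by linarith)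
  unfold hkD; positivity

theorem hkd_bound (ν : ℝ) (hν : -(1 / 2 : ℝ) ≤ ν) (m : ℕ) :
    |hkd ν m| ≤ hkD ν * (1 / ((2 * m).factorial : ℝ)) := by
  have h0 : (0 : ℝ) ≤ m := Nat.cast_nonneg m
  have hG : 0 < Real.Gamma (m + ν + 1) := Real.Gamma_pos_of_pos (by linarith)
  have hG' : 0 < Real.Gamma (ν + 1) := Real.Gamma_pos_of_pos (by linarith)
  unfold hkd hkD
  rw [abs_mul, abs_div, abs_pow, abs_neg, abs_one, one_pow, abs_of_pos (by positivity),
    abs_of_pos (by positivity)]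
  have hf : (0 : ℝ) < (2 * m).factorial := by positivity
  calc _ ≤ 1 / (Real.Gamma (ν + 1) * ((2 * m).factorial : ℝ)) * (2 : ℝ) ^ (-ν) := by
        refine mul_le_mul_of_nonneg_right ?_ (by positivity)
        exact one_div_le_one_div_of_le (by positivity) (hk_gamma_lower ν hν m)
    _ = _ := by field_simp

theorem hk_summand (ν : ℝ) (hν : -(1 / 2 : ℝ) ≤ ν) (y : ℝ) (m : ℕ) :
    ‖hkd ν m * y ^ (2 * m)‖ ≤ hkD ν * (y ^ (2 * m) / ((2 * m).factorial : ℝ)) := by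
  rw [norm_mul, Real.norm_eq_abs, Real.norm_eq_abs, abs_of_nonneg (a := y ^ (2 * m))
    (by rw [pow_mul]; positivity)]
  have := mul_le_mul_of_nonneg_right (hkd_bound ν hν m)
    (show 0 ≤ y ^ (2 * m) by rw [pow_mul]; positivity)
  refine this.trans (le_of_eq (by ring))

theorem hk_summable (ν : ℝ) (hν : -(1 / 2 : ℝ) ≤ ν) (y : ℝ) :
    Summable (fun m => hkd ν m * y ^ (2 * m)) :=
  Summable.of_norm_bounded ((Real.hasSum_cosh y).summable.mul_left _) (hk_summand ν hν y)

theorem hkE_bound (ν : ℝ) (hν : -(1 / 2 : ℝ) ≤ ν) (y : ℝ) (hy : 0 ≤ y) :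
    |hkE ν y| ≤ hkD ν * Real.exp y := by
  have h1 : ‖hkE ν y‖ ≤ hkD ν * Real.cosh y :=
    tsum_of_norm_bounded ((Real.hasSum_cosh y).mul_left _) (hk_summand ν hν y)
  refine h1.trans ?_
  have := hkD_pos ν hν
  gcongr
  rw [Real.cosh_eq]
  have : Real.exp (-y) ≤ Real.exp y := Real.exp_le_exp.2 (by linarith)
  linarith

theorem hkE_measurable (ν : ℝ) (hν : -(1 / 2 : ℝ) ≤ ν) : Measurable (hkE ν) := by
  refine measurable_of_tendsto_metrizable
    (f := fun (n : ℕ) y => ∑ m ∈ Finset.range n, hkd ν m * y ^ (2 * m)) ?_ ?_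
  · intro n; fun_prop
  · rw [tendsto_pi_nhds]
    intro y
    exact (hk_summable ν hν y).hasSum.tendsto_sum_nat

theorem hkk_measurable (ν : ℝ) (hν : -(1 / 2 : ℝ) ≤ ν) : Measurable (hkk ν) := by
  unfold hkk
  have := hkE_measurable ν hν
  fun_prop

theorem hke_measurable (ν q : ℝ) : Measurable (hke ν q) := by
  unfold hke
  fun_prop

theorem hk_gauss (β q : ℝ) (hβ : -1 < β) (hq : 0 < q) :
    ∫ t in Set.Ioi (0 : ℝ), t ^ (2 * β + 1) * Real.exp (-(q * t ^ 2 / 2)) =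
      (q / 2) ^ (-(β + 1)) / 2 * Real.Gamma (β + 1) := by
  have := _root_.integral_rpow_mul_exp_neg_mul_rpow (p := 2) (q := 2 * β + 1) (b := q / 2)
    (by norm_num) (by linarith) (by positivity)
  rw [show -(2 * β + 1 + 1) / 2 = -(β + 1) by ring, show (2 * β + 1 + 1) / 2 = β + 1 by ring]
    at this
  rw [div_eq_mul_one_div _ (2 : ℝ), ← this]
  congr 1; ext t
  rw [Real.rpow_two]; congr 2; ring

theorem hk_gauss_int (β q : ℝ) (hβ : -1 < β) (hq : 0 < q) :
    IntegrableOn (fun t => t ^ (2 * β + 1) * Real.exp (-(q * t ^ 2 / 2))) (Set.Ioi 0) := by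
  have := integrableOn_rpow_mul_exp_neg_mul_sq (b := q / 2) (by positivity) (s := 2 * β + 1)
    (by linarith)
  refine this.congr_fun (fun t _ => ?_) measurableSet_Ioi
  simp only; congr 2; ring

theorem hk_transform (ν : ℝ) (hν : -(1 / 2 : ℝ) ≤ ν) (q x : ℝ) (hq : 0 < q) (hx : 0 < x) :
    ∫ t in Set.Ioi (0 : ℝ), hkk ν (t * x) * hke ν q t =
      q ^ (-(ν + 1)) * hke ν q⁻¹ x := by
  set F : ℕ → ℝ → ℝ := fun m t => (x ^ (ν + 1 / 2) * x ^ (2 * m) * hkd ν m) *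
    (t ^ (2 * (ν + m) + 1) * Real.exp (-(q * t ^ 2 / 2))) with hF
  have hm : ∀ m : ℕ, -1 < ν + m := fun m => by
    have h0 : (0 : ℝ) ≤ m := Nat.cast_nonneg m
    linarith
  have hFi : ∀ m, Integrable (F m) (volume.restrict (Set.Ioi 0)) := fun m =>
    (hk_gauss_int (ν + m) q (hm m) hq).const_mul _
  have hval : ∀ m, (x ^ (ν + 1 / 2) * x ^ (2 * m) * hkd ν m) *
      ((q / 2) ^ (-(ν + m + 1)) / 2 * Real.Gamma (ν + m + 1)) =
      q ^ (-(ν + 1)) * x ^ (ν + 1 / 2) * ((-(x ^ 2 / (2 * q))) ^ m / m.factorial) := by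
    intro m
    have hG : 0 < Real.Gamma (ν + m + 1) := Real.Gamma_pos_of_pos (by linarith [hm m])
    have h1 : (q / 2) ^ (-(ν + m + 1)) = q ^ (-(ν + 1)) * 2 ^ ν * 2 * 2 ^ m / q ^ m := by
      rw [Real.div_rpow hq.le (by norm_num), show -(ν + m + 1) = -(ν + 1) - m by ring,
        Real.rpow_sub hq, Real.rpow_sub (by norm_num), Real.rpow_natCast, Real.rpow_natCast,
        Real.rpow_neg (by norm_num : (0 : ℝ) ≤ 2), Real.rpow_add (by norm_num), Real.rpow_one]
      field_simp
    have h4 : (4 : ℝ) ^ m = 2 ^ m * 2 ^ m := by rw [← mul_pow]; norm_num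
    have h5 : (-(x ^ 2 / (2 * q))) ^ m = (-1) ^ m * x ^ (2 * m) / (2 ^ m * q ^ m) := by
      rw [neg_eq_neg_one_mul, mul_pow, div_pow, mul_pow, pow_mul]; ring
    rw [h1, h5]
    unfold hkd
    rw [show (m : ℝ) + ν + 1 = ν + m + 1 by ring, h4, Real.rpow_neg (by norm_num : (0 : ℝ) ≤ 2)]
    field_simp
  have hint : ∀ m, ∫ t in Set.Ioi (0 : ℝ), F m t =
      q ^ (-(ν + 1)) * x ^ (ν + 1 / 2) * ((-(x ^ 2 / (2 * q))) ^ m / m.factorial) := by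
    intro m
    simp only [hF]
    rw [integral_const_mul, hk_gauss (ν + m) q (hm m) hq, hval]
  have hnorm : ∀ m, ∫ t in Set.Ioi (0 : ℝ), ‖F m t‖ =
      |q ^ (-(ν + 1)) * x ^ (ν + 1 / 2) * ((-(x ^ 2 / (2 * q))) ^ m / m.factorial)| := by
    intro m
    have hG : 0 < Real.Gamma (ν + m + 1) := Real.Gamma_pos_of_pos (by linarith [hm m])
    rw [← hval, abs_mul, abs_of_pos (a := (q / 2) ^ (-(ν + m + 1)) / 2 * Real.Gamma (ν + m + 1))
      (by positivity), ← hk_gauss (ν + m) q (hm m) hq, ← integral_const_mul]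
    refine setIntegral_congr_fun measurableSet_Ioi fun t ht => ?_
    have ht : 0 < t := ht
    simp only [hF]
    rw [norm_mul, Real.norm_eq_abs, Real.norm_eq_abs,
      abs_of_pos (a := t ^ (2 * (ν + m) + 1) * Real.exp (-(q * t ^ 2 / 2))) (by positivity)]
  have hexp : HasSum (fun m : ℕ => q ^ (-(ν + 1)) * x ^ (ν + 1 / 2) *
      ((-(x ^ 2 / (2 * q))) ^ m / m.factorial))
      (q ^ (-(ν + 1)) * x ^ (ν + 1 / 2) * Real.exp (-(x ^ 2 / (2 * q)))) := by
    refine HasSum.mul_left _ ?_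
    rw [Real.exp_eq_exp_ℝ]
    exact NormedSpace.expSeries_div_hasSum_exp _
  have hsum : Summable fun m => ∫ t in Set.Ioi (0 : ℝ), ‖F m t‖ := by
    simp only [hnorm]
    exact hexp.summable.abs
  have hmain := hasSum_integral_of_summable_integral_norm hFi hsum
  simp only [hint] at hmain
  have := hmain.unique hexp
  rw [show hke ν q⁻¹ x = x ^ (ν + 1 / 2) * Real.exp (-(x ^ 2 / (2 * q))) by
    unfold hke; congr 2; field_simp, ← mul_assoc, ← this]
  refine setIntegral_congr_fun measurableSet_Ioi fun t ht => ?_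
  have ht : 0 < t := ht
  simp only [hkk, hke, hkE, hF]
  rw [← tsum_mul_left, ← tsum_mul_right]
  congr 1; ext m
  have e1 : t ^ (2 * (ν + m) + 1) = t ^ (ν + 1 / 2) * t ^ (ν + 1 / 2) * t ^ (2 * m) := by
    rw [← Real.rpow_natCast t (2 * m), ← Real.rpow_add ht, ← Real.rpow_add ht]
    congr 1; push_cast; ring
  rw [e1, Real.mul_rpow ht.le hx.le, mul_pow]
  ring

theorem hke_mul (ν p q t : ℝ) (ht : 0 < t) :
    hke ν p t * hke ν q t = t ^ (2 * ν + 1) * Real.exp (-((p + q) * t ^ 2 / 2)) := by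
  unfold hke
  rw [show t ^ (2 * ν + 1) = t ^ (ν + 1 / 2) * t ^ (ν + 1 / 2) by
    rw [← Real.rpow_add ht]; congr 1; ring,
    show Real.exp (-((p + q) * t ^ 2 / 2)) =
      Real.exp (-(p * t ^ 2 / 2)) * Real.exp (-(q * t ^ 2 / 2)) by
      rw [← Real.exp_add]; congr 1; ring]
  ring

theorem hke_gram (ν : ℝ) (hν : -(1 / 2 : ℝ) ≤ ν) (p q : ℝ) (hp : 0 < p) (hq : 0 < q) :
    ∫ t in Set.Ioi (0 : ℝ), hke ν p t * hke ν q t =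
      ((p + q) / 2) ^ (-(ν + 1)) / 2 * Real.Gamma (ν + 1) := by
  rw [← hk_gauss ν (p + q) (by linarith) (by positivity)]
  exact setIntegral_congr_fun measurableSet_Ioi fun t ht => hke_mul ν p q t ht

theorem hke_gram_int (ν : ℝ) (hν : -(1 / 2 : ℝ) ≤ ν) (p q : ℝ) (hp : 0 < p) (hq : 0 < q) :
    IntegrableOn (fun t => hke ν p t * hke ν q t) (Set.Ioi 0) :=
  (hk_gauss_int ν (p + q) (by linarith) (by positivity)).congr_fun
    (fun t ht => (hke_mul ν p q t ht).symm) measurableSet_Ioi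

theorem hke_memLp (ν : ℝ) (hν : -(1 / 2 : ℝ) ≤ ν) (q : ℝ) (hq : 0 < q) :
    MemLp (fun t => (hke ν q t : ℂ)) 2 (volume.restrict (Set.Ioi (0 : ℝ))) := by
  rw [memLp_two_iff_integrable_sq_norm]
  · refine (hke_gram_int ν hν q q hq hq).congr (Filter.Eventually.of_forall fun t => ?_)
    simp [sq]
  · exact (Complex.measurable_ofReal.comp (hke_measurable ν q)).aestronglyMeasurable

/-- The Hankel transform (symmetric form). -/
noncomputable def hkA (ν : ℝ) (φ : ℝ → ℂ) (x : ℝ) : ℂ :=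
  ∫ t in Set.Ioi (0 : ℝ), (hkk ν (t * x) : ℂ) * φ t

theorem hk_bdd (φ : ℝ → ℂ) (a b : ℝ) (ha : 0 < a) (hc : ContinuousOn φ (Set.Ioi 0))
    (h0 : ∀ t, t ∉ Set.Icc a b → φ t = 0) : ∃ M, 0 ≤ M ∧ ∀ t, ‖φ t‖ ≤ M := by
  obtain ⟨C, hC⟩ := (isCompact_Icc (a := a) (b := b)).exists_bound_of_continuousOn
    (hc.mono fun t ht => lt_of_lt_of_le ha ht.1)
  refine ⟨max C 0, le_max_right _ _, fun t => ?_⟩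
  by_cases ht : t ∈ Set.Icc a b
  · exact (hC t ht).trans (le_max_left _ _)
  · simp [h0 t ht]

theorem hk_phi_memLp (φ : ℝ → ℂ) (a b : ℝ) (ha : 0 < a) (hc : ContinuousOn φ (Set.Ioi 0))
    (h0 : ∀ t, t ∉ Set.Icc a b → φ t = 0) (p : ENNReal) :
    MemLp φ p (volume.restrict (Set.Ioi (0 : ℝ))) := by
  obtain ⟨M, hM0, hM⟩ := hk_bdd φ a b ha hc h0
  have hm : AEStronglyMeasurable φ (volume.restrict (Set.Ioi (0 : ℝ))) :=
    hc.aestronglyMeasurable measurableSet_Ioi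
  have h1 : MemLp ((Set.Icc a b).indicator fun _ => M) p (volume.restrict (Set.Ioi (0 : ℝ))) := by
    refine memLp_indicator_const p measurableSet_Icc M (Or.inr ?_)
    exact ((Measure.restrict_apply_le _ _).trans_lt (by simp)).ne
  refine h1.mono hm (Filter.Eventually.of_forall fun t => ?_)
  by_cases ht : t ∈ Set.Icc a b
  · simp only [Set.indicator_of_mem ht]
    exact (hM t).trans (le_abs_self _)
  · simp [h0 t ht]

theorem hk_fubini (ν : ℝ) (hν : -(1 / 2 : ℝ) ≤ ν) (φ : ℝ → ℂ) (a b : ℝ) (ha : 0 < a)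
    (hc : ContinuousOn φ (Set.Ioi 0)) (h0 : ∀ t, t ∉ Set.Icc a b → φ t = 0)
    (q : ℝ) (hq : 0 < q) :
    Integrable (Function.uncurry fun x t : ℝ => (hkk ν (t * x) : ℂ) * φ t * (hke ν q x : ℂ))
      ((volume.restrict (Set.Ioi (0 : ℝ))).prod (volume.restrict (Set.Ioi (0 : ℝ)))) := by
  have hφ1 : Integrable φ (volume.restrict (Set.Ioi (0 : ℝ))) :=
    memLp_one_iff_integrable.1 (hk_phi_memLp φ a b ha hc h0 1)
  have hg := ((hk_gauss_int ν (q / 2) (by linarith) (by positivity)).const_mul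
    (hkD ν * b ^ (ν + 1 / 2) * Real.exp (b ^ 2 / q))).mul_prod hφ1.norm
  refine hg.mono' ?_ ?_
  · have h1 : AEStronglyMeasurable (fun z : ℝ × ℝ => φ z.2)
        ((volume.restrict (Set.Ioi (0 : ℝ))).prod (volume.restrict (Set.Ioi (0 : ℝ)))) :=
      hφ1.aestronglyMeasurable.comp_snd
    have h2 : Measurable fun z : ℝ × ℝ => (hkk ν (z.2 * z.1) : ℂ) :=
      Complex.measurable_ofReal.comp
        ((hkk_measurable ν hν).comp (measurable_snd.mul measurable_fst))
    have h3 : Measurable fun z : ℝ × ℝ => (hke ν q z.1 : ℂ) :=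
      Complex.measurable_ofReal.comp ((hke_measurable ν q).comp measurable_fst)
    exact (h2.aestronglyMeasurable.mul h1).mul h3.aestronglyMeasurable
  · rw [Measure.prod_restrict]
    filter_upwards [ae_restrict_mem (measurableSet_Ioi.prod measurableSet_Ioi)] with z hz
    obtain ⟨x, t⟩ := z
    have hx : 0 < x := hz.1
    have ht : 0 < t := hz.2
    simp only [Function.uncurry]
    by_cases htb : t ∈ Set.Icc a b
    · have hb : 0 < b := lt_of_lt_of_le ht htb.2
      have hα : 0 ≤ ν + 1 / 2 := by linarith
      have hD := hkD_pos ν hν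
      rw [norm_mul, norm_mul, norm_real, norm_real, Real.norm_eq_abs, Real.norm_eq_abs]
      have k1 : |hkk ν (t * x)| ≤ b ^ (ν + 1 / 2) * x ^ (ν + 1 / 2) * (hkD ν * Real.exp (b * x)) := by
        unfold hkk
        rw [abs_mul, abs_of_nonneg (a := (t * x) ^ (ν + 1 / 2)) (by positivity),
          ← Real.mul_rpow hb.le hx.le]
        have h3 := hkE_bound ν hν (t * x) (by positivity)
        have h4 : t * x ≤ b * x := mul_le_mul_of_nonneg_right htb.2 hx.le
        have h5 : Real.exp (t * x) ≤ Real.exp (b * x) := Real.exp_le_exp.2 h4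
        have h6 : (t * x) ^ (ν + 1 / 2) ≤ (b * x) ^ (ν + 1 / 2) :=
          Real.rpow_le_rpow (by positivity) h4 hα
        exact mul_le_mul h6 (h3.trans (mul_le_mul_of_nonneg_left h5 hD.le)) (abs_nonneg _)
          (by positivity)
      have k2 : |hke ν q x| = x ^ (ν + 1 / 2) * Real.exp (-(q * x ^ 2 / 2)) := by
        unfold hke; exact abs_of_pos (by positivity)
      have k3 : Real.exp (b * x) * Real.exp (-(q * x ^ 2 / 2)) ≤
          Real.exp (b ^ 2 / q) * Real.exp (-(q / 2 * x ^ 2 / 2)) := by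
        rw [← Real.exp_add, ← Real.exp_add, Real.exp_le_exp]
        have e : b ^ 2 / q + -(q / 2 * x ^ 2 / 2) - (b * x + -(q * x ^ 2 / 2)) =
            (b - q * x / 2) ^ 2 / q := by field_simp; ring
        have e2 : 0 ≤ (b - q * x / 2) ^ 2 / q := by positivity
        linarith
      have k4 : x ^ (2 * ν + 1) = x ^ (ν + 1 / 2) * x ^ (ν + 1 / 2) := by
        rw [← Real.rpow_add hx]; congr 1; ring
      rw [k2, k4]
      calc _ ≤ (b ^ (ν + 1 / 2) * x ^ (ν + 1 / 2) * (hkD ν * Real.exp (b * x))) * ‖φ t‖ *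
            (x ^ (ν + 1 / 2) * Real.exp (-(q * x ^ 2 / 2))) := by gcongr
        _ = (hkD ν * b ^ (ν + 1 / 2) * (x ^ (ν + 1 / 2) * x ^ (ν + 1 / 2)) * ‖φ t‖) *
            (Real.exp (b * x) * Real.exp (-(q * x ^ 2 / 2))) := by ring
        _ ≤ (hkD ν * b ^ (ν + 1 / 2) * (x ^ (ν + 1 / 2) * x ^ (ν + 1 / 2)) * ‖φ t‖) *
            (Real.exp (b ^ 2 / q) * Real.exp (-(q / 2 * x ^ 2 / 2))) := by gcongr
        _ = _ := by ring
    · simp [h0 t htb]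

theorem hk_weak (ν : ℝ) (hν : -(1 / 2 : ℝ) ≤ ν) (φ : ℝ → ℂ) (a b : ℝ) (ha : 0 < a)
    (hc : ContinuousOn φ (Set.Ioi 0)) (h0 : ∀ t, t ∉ Set.Icc a b → φ t = 0)
    (q : ℝ) (hq : 0 < q) :
    IntegrableOn (fun x => hkA ν φ x * (hke ν q x : ℂ)) (Set.Ioi 0) ∧
    ∫ x in Set.Ioi (0 : ℝ), hkA ν φ x * (hke ν q x : ℂ) =
      ∫ t in Set.Ioi (0 : ℝ), φ t * ((q ^ (-(ν + 1)) * hke ν q⁻¹ t : ℝ) : ℂ) := by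
  have hF := hk_fubini ν hν φ a b ha hc h0 q hq
  have e : ∀ x, hkA ν φ x * (hke ν q x : ℂ) =
      ∫ t in Set.Ioi (0 : ℝ), (hkk ν (t * x) : ℂ) * φ t * (hke ν q x : ℂ) := fun x => by
    rw [integral_mul_const]; rfl
  refine ⟨?_, ?_⟩
  · simp only [e]
    exact hF.integral_prod_left
  · simp only [e]
    rw [integral_integral_swap hF]
    refine setIntegral_congr_fun measurableSet_Ioi fun t ht => ?_
    have ht : 0 < t := ht
    rw [← hk_transform ν hν q t hq ht, ← integral_complex_ofReal, ← integral_const_mul]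
    congr 1; ext x
    rw [mul_comm t x]; push_cast; ring

theorem hk_inner_toLp (F G : ℝ → ℂ) (hF : MemLp F 2 (volume.restrict (Set.Ioi (0 : ℝ))))
    (hG : MemLp G 2 (volume.restrict (Set.Ioi (0 : ℝ)))) :
    inner ℂ (hF.toLp F) (hG.toLp G) =
      ∫ t in Set.Ioi (0 : ℝ), G t * (starRingEnd ℂ) (F t) := by
  rw [L2.inner_def]
  refine integral_congr_ae ?_
  filter_upwards [hF.coeFn_toLp, hG.coeFn_toLp] with t h1 h2
  rw [h1, h2, RCLike.inner_apply]

theorem hk_inner_left (F : ℝ → ℂ) (hF : MemLp F 2 (volume.restrict (Set.Ioi (0 : ℝ))))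
    (G : Lp ℂ 2 (volume.restrict (Set.Ioi (0 : ℝ)))) :
    inner ℂ (hF.toLp F) G = ∫ t in Set.Ioi (0 : ℝ), G t * (starRingEnd ℂ) (F t) := by
  rw [L2.inner_def]
  refine integral_congr_ae ?_
  filter_upwards [hF.coeFn_toLp] with t h1
  rw [h1, RCLike.inner_apply]

theorem hk_int_left (ν : ℝ) (hν : -(1 / 2 : ℝ) ≤ ν) (q : ℝ) (hq : 0 < q)
    (G : Lp ℂ 2 (volume.restrict (Set.Ioi (0 : ℝ)))) :
    IntegrableOn (fun t => G t * (hke ν q t : ℂ)) (Set.Ioi 0) := by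
  refine (L2.integrable_inner (𝕜 := ℂ) ((hke_memLp ν hν q hq).toLp _) G).congr ?_
  filter_upwards [(hke_memLp ν hν q hq).coeFn_toLp] with t h1
  rw [h1, RCLike.inner_apply, conj_ofReal]

/-- Uniqueness in terms of the `hke`. -/
theorem hk_unique' (ν : ℝ) (u : ℝ → ℂ)
    (hi : ∀ q, 0 < q → IntegrableOn (fun t => u t * (hke ν q t : ℂ)) (Set.Ioi 0))
    (h0 : ∀ q, 0 < q → ∫ t in Set.Ioi (0 : ℝ), u t * (hke ν q t : ℂ) = 0) :
    ∀ᵐ x ∂(volume.restrict (Set.Ioi (0 : ℝ))), u x = 0 := by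
  have := hk_unique (fun x => u x * ((x ^ (ν + 1 / 2) : ℝ) : ℂ)) ?_ ?_
  · filter_upwards [this, ae_restrict_mem measurableSet_Ioi] with x hx hx0
    have hx0 : 0 < x := hx0
    rcases mul_eq_zero.1 hx with h | h
    · exact h
    · exact absurd h (by exact_mod_cast (Real.rpow_pos_of_pos hx0 _).ne')
  · refine (hi 1 one_pos).congr_fun (fun x _ => ?_) measurableSet_Ioi
    simp only [hke, one_mul]; push_cast; ring
  · intro n
    rw [← h0 (n + 1) (by positivity)]
    congr 1; ext x
    simp only [hke]; push_cast; ring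

theorem hk_core (ν : ℝ) (hν : -(1 / 2 : ℝ) ≤ ν) (φ ψ : ℝ → ℂ) (a b a' b' : ℝ)
    (ha : 0 < a) (ha' : 0 < a')
    (hφ : ContinuousOn φ (Set.Ioi 0)) (hφ0 : ∀ t, t ∉ Set.Icc a b → φ t = 0)
    (hψ : ContinuousOn ψ (Set.Ioi 0)) (hψ0 : ∀ t, t ∉ Set.Icc a' b' → ψ t = 0) :
    ∫ t in Set.Ioi (0 : ℝ), φ t * (starRingEnd ℂ) (ψ t) =
      ∫ x in Set.Ioi (0 : ℝ), hkA ν φ x * (starRingEnd ℂ) (hkA ν ψ x) := by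
  have hm := fun q : {q : ℝ // 0 < q} => hke_memLp ν hν q.1 q.2
  have hm' : ∀ q : {q : ℝ // 0 < q}, MemLp (fun t => ((q.1 ^ (-(ν + 1)) * hke ν q.1⁻¹ t : ℝ) : ℂ)) 2
      (volume.restrict (Set.Ioi (0 : ℝ))) := fun q => by
    have := (hke_memLp ν hν q.1⁻¹ (inv_pos.2 q.2)).const_mul ((q.1 ^ (-(ν + 1)) : ℝ) : ℂ)
    simpa using this
  have hpow : ∀ p q r s : ℝ, 0 < p → 0 < q → 0 < r → 0 < s → p * q = r * s →
      p ^ (-(ν + 1)) * ((q / 2) ^ (-(ν + 1)) / 2 * Real.Gamma (ν + 1)) =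
      r ^ (-(ν + 1)) * ((s / 2) ^ (-(ν + 1)) / 2 * Real.Gamma (ν + 1)) := by
    intro p q r s hp hq hr hs h
    have : p ^ (-(ν + 1)) * (q / 2) ^ (-(ν + 1)) = r ^ (-(ν + 1)) * (s / 2) ^ (-(ν + 1)) := by
      rw [← Real.mul_rpow hp.le (by positivity), ← Real.mul_rpow hr.le (by positivity)]
      congr 1; linarith
    linear_combination (this / 2 * Real.Gamma (ν + 1))
  set E : {q : ℝ // 0 < q} → Lp ℂ 2 (volume.restrict (Set.Ioi (0 : ℝ))) :=
    fun q => (hm q).toLp _ with hE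
  set E' : {q : ℝ // 0 < q} → Lp ℂ 2 (volume.restrict (Set.Ioi (0 : ℝ))) :=
    fun q => (hm' q).toLp _ with hE'
  have hcast : ∀ c p q : ℝ, 0 < p → 0 < q →
      ∫ t in Set.Ioi (0 : ℝ), ((c * (hke ν p t * hke ν q t) : ℝ) : ℂ) =
        ((c * (((p + q) / 2) ^ (-(ν + 1)) / 2 * Real.Gamma (ν + 1)) : ℝ) : ℂ) := by
    intro c p q hp hq
    rw [integral_complex_ofReal, integral_const_mul, hke_gram ν hν p q hp hq]
  have hex : ∃ U : Lp ℂ 2 (volume.restrict (Set.Ioi (0 : ℝ))) →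
        Lp ℂ 2 (volume.restrict (Set.Ioi (0 : ℝ))),
      (∀ u v, inner ℂ (U u) (U v) = inner ℂ u v) ∧
      ∀ u q, inner ℂ (U u) (E q) = inner ℂ u (E' q) := by
    refine hk_exists_isometry E E' ?_ ?_ ?_
    · intro p q
      simp only [hE, hE']
      rw [hk_inner_toLp, hk_inner_toLp]
      have h1 := hcast 1 p.1 q.1 p.2 q.2
      have h2 := hcast (p.1 ^ (-(ν + 1)) * q.1 ^ (-(ν + 1))) p.1⁻¹ q.1⁻¹ (inv_pos.2 p.2)
        (inv_pos.2 q.2)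
      have hp := p.2
      have hq := q.2
      have h3 := hpow 1 (p.1 + q.1) (p.1 * q.1) (p.1⁻¹ + q.1⁻¹) one_pos (by positivity)
        (by positivity) (by positivity) (by field_simp; ring)
      rw [Real.one_rpow, Real.mul_rpow hp.le hq.le] at h3
      rw [h3, ← h2] at h1
      convert h1 using 3 with t t
      · rw [conj_ofReal]; push_cast; ring
      · rw [conj_ofReal]; push_cast; ring
    · intro p q
      simp only [hE, hE']
      rw [hk_inner_toLp, hk_inner_toLp]
      have hp := p.2
      have hq := q.2
      have h1 := hcast (p.1 ^ (-(ν + 1))) p.1⁻¹ q.1 (inv_pos.2 p.2) q.2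
      have h2 := hcast (q.1 ^ (-(ν + 1))) p.1 q.1⁻¹ p.2 (inv_pos.2 q.2)
      have h3 := hpow p.1 (p.1⁻¹ + q.1) q.1 (p.1 + q.1⁻¹) hp (by positivity)
        hq (by positivity) (by field_simp; ring)
      rw [h3, ← h2] at h1
      convert h1 using 3 with t t
      · rw [conj_ofReal]; push_cast; ring
      · rw [conj_ofReal]; push_cast; ring
    · rw [Submodule.topologicalClosure_eq_top_iff, Submodule.eq_bot_iff]
      intro u hu
      rw [Submodule.mem_orthogonal] at hu
      have := hk_unique' ν u (fun q hq => hk_int_left ν hν q hq u) ?_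
      · rw [Lp.eq_zero_iff_ae_eq_zero]
        exact this
      · intro q hq
        have h1 := hu (E ⟨q, hq⟩) (Submodule.subset_span ⟨_, rfl⟩)
        simp only [hE] at h1
        rw [hk_inner_left] at h1
        simpa only [conj_ofReal] using h1
  obtain ⟨U, hU1, hU2⟩ := hex
  have key : ∀ (χ : ℝ → ℂ) (c d : ℝ), 0 < c → ContinuousOn χ (Set.Ioi 0) →
      (∀ t, t ∉ Set.Icc c d → χ t = 0) →
      ∀ hχ : MemLp χ 2 (volume.restrict (Set.Ioi (0 : ℝ))),
      ∀ᵐ x ∂(volume.restrict (Set.Ioi (0 : ℝ))), U (hχ.toLp χ) x = hkA ν χ x := by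
    intro χ c d hc hχc hχ0 hχ
    have := hk_unique' ν (fun x => U (hχ.toLp χ) x - hkA ν χ x) ?_ ?_
    · filter_upwards [this] with x hx using sub_eq_zero.1 hx
    · intro q hq
      have := (hk_int_left ν hν q hq (U (hχ.toLp χ))).sub
        (hk_weak ν hν χ c d hc hχc hχ0 q hq).1
      refine this.congr (Filter.Eventually.of_forall fun x => ?_)
      simp [sub_mul]
    · intro q hq
      simp only [sub_mul]
      rw [integral_sub (hk_int_left ν hν q hq _) (hk_weak ν hν χ c d hc hχc hχ0 q hq).1,
        (hk_weak ν hν χ c d hc hχc hχ0 q hq).2, sub_eq_zero]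
      have h1 := congrArg (starRingEnd ℂ) (hU2 (hχ.toLp χ) ⟨q, hq⟩)
      rw [inner_conj_symm, inner_conj_symm, hk_inner_left, hk_inner_toLp] at h1
      simpa only [conj_ofReal] using h1
  have hφL := hk_phi_memLp φ a b ha hφ hφ0 2
  have hψL := hk_phi_memLp ψ a' b' ha' hψ hψ0 2
  rw [← hk_inner_toLp ψ φ hψL hφL, ← hU1, L2.inner_def]
  refine integral_congr_ae ?_
  filter_upwards [key φ a b ha hφ hφ0 hφL, key ψ a' b' ha' hψ hψ0 hψL] with x h1 h2
  rw [h1, h2, RCLike.inner_apply]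

/-- The reduced function. -/
noncomputable def hkphi (μ θ : ℝ) (f : ℝ → ℂ) (t : ℝ) : ℂ :=
  ((t ^ (μ + 1 / 2) : ℝ) : ℂ) * Complex.exp ((I / 2) * (t : ℂ) ^ 2 * (Real.cot θ : ℂ)) * f t

theorem hkphi_cont (μ θ : ℝ) (f : ℝ → ℂ) (hf : Continuous f) :
    ContinuousOn (hkphi μ θ f) (Set.Ioi 0) := by
  unfold hkphi
  refine ContinuousOn.mul (ContinuousOn.mul ?_ ?_) hf.continuousOn
  · refine Complex.continuous_ofReal.comp_continuousOn ?_
    exact ContinuousOn.rpow_const continuousOn_id fun t ht => Or.inl (ne_of_gt ht)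
  · exact Continuous.continuousOn (by fun_prop)

theorem hk_supp (f : ℝ → ℂ) (hfc : HasCompactSupport f) (hfs : tsupport f ⊆ Set.Ioi 0) :
    ∃ a b : ℝ, 0 < a ∧ ∀ t, t ∉ Set.Icc a b → f t = 0 := by
  rcases (tsupport f).eq_empty_or_nonempty with h | h
  · exact ⟨1, 1, one_pos, fun t _ => image_eq_zero_of_notMem_tsupport (by simp [h])⟩
  · obtain ⟨a, ha⟩ := hfc.isCompact.exists_isLeast h
    obtain ⟨b, hb⟩ := hfc.isCompact.exists_isGreatest h
    exact ⟨a, b, hfs ha.1, fun t ht => image_eq_zero_of_notMem_tsupport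
      fun hm => ht ⟨ha.2 hm, hb.2 hm⟩⟩

theorem hk_frac (ν μ θ : ℝ) (hs : 0 < Real.sin θ) (f : ℝ → ℂ) (ω : ℝ) (hω : 0 < ω) :
    fracHankel ν μ θ f ω = fracHankelConst ν μ θ *
      Complex.exp ((I / 2) * (ω : ℂ) ^ 2 * (Real.cot θ : ℂ)) *
      (((ω * (Real.sin θ)⁻¹) ^ (-(μ + 1 / 2)) : ℝ) : ℂ) *
      hkA ν (hkphi μ θ f) (ω * (Real.sin θ)⁻¹) := by
  unfold fracHankel hkA
  rw [← integral_const_mul]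
  refine setIntegral_congr_fun measurableSet_Ioi fun t ht => ?_
  have ht : 0 < t := ht
  have hx : 0 < ω * (Real.sin θ)⁻¹ := by positivity
  simp only [fracHankelKernel, hkphi]
  rw [mul_assoc t ω]
  set x := ω * (Real.sin θ)⁻¹
  have e1 : Complex.exp ((I / 2) * ((t : ℂ) ^ 2 + (ω : ℂ) ^ 2) * (Real.cot θ : ℂ)) =
      Complex.exp ((I / 2) * (t : ℂ) ^ 2 * (Real.cot θ : ℂ)) *
      Complex.exp ((I / 2) * (ω : ℂ) ^ 2 * (Real.cot θ : ℂ)) := by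
    rw [← Complex.exp_add]; congr 1; ring
  have e2 : (t * x) ^ (-μ) * besselJ ν (t * x) * t ^ (1 + 2 * μ) =
      x ^ (-(μ + 1 / 2)) * hkk ν (t * x) * t ^ (μ + 1 / 2) := by
    rw [hk_bessel ν _ (by positivity), hkk, Real.mul_rpow ht.le hx.le, Real.mul_rpow ht.le hx.le,
      Real.mul_rpow ht.le hx.le]
    have a1 : t ^ (-μ) * t ^ ν * t ^ (1 + 2 * μ) = t ^ (ν + 1 / 2) * t ^ (μ + 1 / 2) := by
      rw [← Real.rpow_add ht, ← Real.rpow_add ht, ← Real.rpow_add ht]; congr 1; ring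
    have a2 : x ^ (-μ) * x ^ ν = x ^ (-(μ + 1 / 2)) * x ^ (ν + 1 / 2) := by
      rw [← Real.rpow_add hx, ← Real.rpow_add hx]; congr 1; ring
    linear_combination (x ^ (-μ) * x ^ ν * hkE ν (t * x)) * a1 +
      (t ^ (ν + 1 / 2) * t ^ (μ + 1 / 2) * hkE ν (t * x)) * a2
  have e3 := congrArg (fun r : ℝ => (r : ℂ)) e2
  simp only [ofReal_mul] at e3
  rw [e1]
  linear_combination (fracHankelConst ν μ θ *
    Complex.exp ((I / 2) * (t : ℂ) ^ 2 * (Real.cot θ : ℂ)) *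
      Complex.exp ((I / 2) * (ω : ℂ) ^ 2 * (Real.cot θ : ℂ)) * f t) * e3

theorem hk_exp_conj (r : ℝ) (z : ℂ) (hz : z = r * I) :
    Complex.exp z * (starRingEnd ℂ) (Complex.exp z) = 1 := by
  rw [hz, Complex.mul_conj, Complex.normSq_eq_norm_sq, Complex.norm_exp_ofReal_mul_I]
  simp

theorem stmt_9 (ν μ θ : ℝ) (hν : -(1 / 2 : ℝ) ≤ ν) (hθ1 : 0 < θ) (hθ2 : θ < Real.pi)
    (hθ : Real.sin θ ≠ 0)
    (f g : ℝ → ℂ) (hf : ContDiff ℝ (⊤ : ℕ∞) f) (hfc : HasCompactSupport f)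
    (hfs : tsupport f ⊆ Set.Ioi 0)
    (hg : ContDiff ℝ (⊤ : ℕ∞) g) (hgc : HasCompactSupport g)
    (hgs : tsupport g ⊆ Set.Ioi 0) :
    ∫ t in Set.Ioi (0 : ℝ), f t * (starRingEnd ℂ) (g t) * ((t ^ (1 + 2 * μ) : ℝ) : ℂ) =
      ∫ ω in Set.Ioi (0 : ℝ), fracHankel ν μ θ f ω *
        (starRingEnd ℂ) (fracHankel ν μ θ g ω) * ((ω ^ (1 + 2 * μ) : ℝ) : ℂ) := by
  have hs : 0 < Real.sin θ := Real.sin_pos_of_pos_of_lt_pi hθ1 hθ2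
  obtain ⟨a, b, ha, hab⟩ := hk_supp f hfc hfs
  obtain ⟨a', b', ha', hab'⟩ := hk_supp g hgc hgs
  have hcore := hk_core ν hν (hkphi μ θ f) (hkphi μ θ g) a b a' b' ha ha'
    (hkphi_cont μ θ f hf.continuous) (fun t ht => by simp [hkphi, hab t ht])
    (hkphi_cont μ θ g hg.continuous) (fun t ht => by simp [hkphi, hab' t ht])
  have hL : ∫ t in Set.Ioi (0 : ℝ), f t * (starRingEnd ℂ) (g t) * ((t ^ (1 + 2 * μ) : ℝ) : ℂ) =
      ∫ t in Set.Ioi (0 : ℝ), hkphi μ θ f t * (starRingEnd ℂ) (hkphi μ θ g t) := by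
    refine setIntegral_congr_fun measurableSet_Ioi fun t ht => ?_
    have ht : 0 < t := ht
    simp only [hkphi, map_mul, conj_ofReal]
    have e1 := hk_exp_conj (t ^ 2 * Real.cot θ / 2)
      ((I / 2) * (t : ℂ) ^ 2 * (Real.cot θ : ℂ)) (by push_cast; ring)
    have e2 : t ^ (1 + 2 * μ) = t ^ (μ + 1 / 2) * t ^ (μ + 1 / 2) := by
      rw [← Real.rpow_add ht]; congr 1; ring
    rw [e2, ofReal_mul]
    linear_combination -(f t * (starRingEnd ℂ) (g t) * ((t ^ (μ + 1 / 2) : ℝ) : ℂ) *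
      ((t ^ (μ + 1 / 2) : ℝ) : ℂ)) * e1
  rw [hL, hcore]
  have hR : ∫ ω in Set.Ioi (0 : ℝ), fracHankel ν μ θ f ω *
        (starRingEnd ℂ) (fracHankel ν μ θ g ω) * ((ω ^ (1 + 2 * μ) : ℝ) : ℂ) =
      ∫ ω in Set.Ioi (0 : ℝ), ((Real.sin θ)⁻¹ : ℝ) •
        (hkA ν (hkphi μ θ f) (ω * (Real.sin θ)⁻¹) *
        (starRingEnd ℂ) (hkA ν (hkphi μ θ g) (ω * (Real.sin θ)⁻¹))) := by
    refine setIntegral_congr_fun measurableSet_Ioi fun ω hω => ?_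
    have hω : 0 < ω := hω
    rw [hk_frac ν μ θ hs f ω hω, hk_frac ν μ θ hs g ω hω, Complex.real_smul]
    simp only [map_mul, conj_ofReal]
    have e1 := hk_exp_conj (ω ^ 2 * Real.cot θ / 2)
      ((I / 2) * (ω : ℂ) ^ 2 * (Real.cot θ : ℂ)) (by push_cast; ring)
    have e2 : fracHankelConst ν μ θ * (starRingEnd ℂ) (fracHankelConst ν μ θ) =
        (((Real.sin θ ^ (1 + μ) * Real.sin θ ^ (1 + μ))⁻¹ : ℝ) : ℂ) := by
      have := hk_exp_conj ((1 + ν) * (θ - Real.pi / 2))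
        (I * ((1 + ν : ℝ) : ℂ) * ((θ - Real.pi / 2 : ℝ) : ℂ)) (by push_cast; ring)
      unfold fracHankelConst
      rw [map_div₀, conj_ofReal, div_mul_div_comm, this]
      push_cast; rw [one_div]
    have e3 : (Real.sin θ ^ (1 + μ) * Real.sin θ ^ (1 + μ))⁻¹ *
        ((ω * (Real.sin θ)⁻¹) ^ (-(μ + 1 / 2)) * (ω * (Real.sin θ)⁻¹) ^ (-(μ + 1 / 2)) *
          ω ^ (1 + 2 * μ)) = (Real.sin θ)⁻¹ := by
      have hx : 0 < ω * (Real.sin θ)⁻¹ := by positivity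
      rw [← Real.rpow_add hx, ← Real.rpow_add hs,
        show -(μ + 1 / 2) + -(μ + 1 / 2) = -(1 + 2 * μ) by ring,
        Real.mul_rpow hω.le (by positivity), Real.rpow_neg hω.le, Real.inv_rpow hs.le,
        Real.rpow_neg hs.le, show 1 + μ + (1 + μ) = (1 + 2 * μ) + 1 by ring, Real.rpow_add hs,
        Real.rpow_one]
      have h1 := Real.rpow_pos_of_pos hω (1 + 2 * μ)
      have h2 := Real.rpow_pos_of_pos hs (1 + 2 * μ)
      field_simp
    have e4 := congrArg (fun r : ℝ => (r : ℂ)) e3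
    simp only [ofReal_mul] at e4
    generalize hkA ν (hkphi μ θ f) (ω * (Real.sin θ)⁻¹) = A
    generalize (starRingEnd ℂ) (hkA ν (hkphi μ θ g) (ω * (Real.sin θ)⁻¹)) = B
    generalize ((((ω * (Real.sin θ)⁻¹) ^ (-(μ + 1 / 2)) : ℝ)) : ℂ) = X at *
    generalize ((ω ^ (1 + 2 * μ) : ℝ) : ℂ) = W at *
    linear_combination (A * B * X ^ 2 * W * (fracHankelConst ν μ θ *
      (starRingEnd ℂ) (fracHankelConst ν μ θ))) * e1 + (A * B * X ^ 2 * W) * e2 + (A * B) * e4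
  rw [hR, integral_smul, integral_comp_mul_right_Ioi
    (fun x => hkA ν (hkphi μ θ f) x * (starRingEnd ℂ) (hkA ν (hkphi μ θ g) x)) 0
    (inv_pos.2 hs), smul_smul]
  simp [hθ]
end

section
/- Let ν ≥ −1/2, μ, θ real with sin θ ≠ 0, and let ψ be a smooth rapidly decreasing function on (0,∞). For q ∈ ℕ, one has the shift identity (H^{−θ}_{ν+q+1,μ}(x^q M_{ν,μ,−θ}ψ))(y) = y csc θ · e^{−i(θ−π/2)} · (H^{−θ}_{ν+q,μ}(x^q ψ))(y), where M_{ν,μ,−θ}ψ(x) = −e^{(i/2)x²cot θ} x^{ν−μ} d/dx[e^{−(i/2)x²cot θ} x^{μ−ν} ψ(x)] and H^{−θ}_{λ,μ} is the inverse fractional Hankel transform of order λ. -/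
open MeasureTheory Complex

/-- The inverse fractional Hankel transform `H^{−θ}_{λ,μ}` of order `λ`. -/
noncomputable def fracHankelInv (lam μ θ : ℝ) (g : ℝ → ℂ) (y : ℝ) : ℂ :=
  ∫ x in Set.Ioi (0 : ℝ),
    (Complex.exp (-I * ((1 + lam : ℝ) : ℂ) * ((θ - Real.pi / 2 : ℝ) : ℂ)) /
        ((Real.sin θ ^ (1 + μ) : ℝ) : ℂ)) *
      Complex.exp (-(I / 2) * ((x : ℂ) ^ 2 + (y : ℂ) ^ 2) * (Real.cot θ : ℂ)) *
      (((x * y * (Real.sin θ)⁻¹) ^ (-μ) : ℝ) : ℂ) *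
      ((besselJ lam (x * y * (Real.sin θ)⁻¹) : ℝ) : ℂ) *
      ((x ^ (1 + 2 * μ) : ℝ) : ℂ) * g x

/-- The modified differential operator `M_{ν,μ,−θ}`:
`M_{ν,μ,−θ}ψ(x) = −e^{(i/2)x²cot θ} x^{ν−μ} D_x[e^{−(i/2)x²cot θ} x^{μ−ν} ψ(x)]`. -/
noncomputable def fracMneg (ν μ θ : ℝ) (ψ : ℝ → ℂ) : ℝ → ℂ := fun x =>
  -(Complex.exp ((I / 2) * (x : ℂ) ^ 2 * (Real.cot θ : ℂ)) * (x : ℂ) ^ ((ν - μ : ℝ) : ℂ) *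
    deriv (fun t : ℝ =>
      Complex.exp (-(I / 2) * (t : ℂ) ^ 2 * (Real.cot θ : ℂ)) *
        (t : ℂ) ^ ((μ - ν : ℝ) : ℂ) * ψ t) x)


/-- Coefficients of the normalised Bessel series. -/
noncomputable def bcoef (l : ℝ) (m : ℕ) : ℝ :=
  (-1 : ℝ) ^ m / (m.factorial * Real.Gamma (m + l + 1))

/-- The entire function `∑ (-1)^m / (m! Γ(m+l+1)) w^m`. -/
noncomputable def bg (l w : ℝ) : ℝ := ∑' m : ℕ, bcoef l m * w ^ m

lemma bGamma_pos {l : ℝ} (hl : -1 < l) (m : ℕ) : 0 < Real.Gamma (m + l + 1) :=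
  Real.Gamma_pos_of_pos (by have : (0:ℝ) ≤ m := m.cast_nonneg; linarith)

lemma bcoef_ne {l : ℝ} (hl : -1 < l) (m : ℕ) : bcoef l m ≠ 0 := by
  have := bGamma_pos hl m
  have h2 : (0:ℝ) < m.factorial := by positivity
  unfold bcoef
  positivity

lemma bcoef_succ {l : ℝ} (hl : -1 < l) (m : ℕ) :
    ((m:ℝ) + 1) * bcoef l (m + 1) = - bcoef (l + 1) m := by
  have := bGamma_pos hl (m+1)
  have h2 : (0:ℝ) < m.factorial := by positivity
  have h3 : (0:ℝ) < (m:ℝ) + 1 := by positivity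
  unfold bcoef
  rw [Nat.factorial_succ]
  push_cast at this ⊢
  rw [show (m:ℝ) + (l + 1) + 1 = m + 1 + l + 1 by ring, pow_succ]
  field_simp

lemma bcoef_up {l : ℝ} (hl : -1 < l) (m : ℕ) :
    ((m:ℝ) + l + 1) * bcoef (l + 1) m = bcoef l m := by
  have := bGamma_pos hl m
  have h2 : (0:ℝ) < m.factorial := by positivity
  have h3 : (0:ℝ) < (m:ℝ) + l + 1 := by have : (0:ℝ) ≤ m := m.cast_nonneg; linarith
  unfold bcoef
  rw [show (m:ℝ) + (l + 1) + 1 = (m + l + 1) + 1 by ring, Real.Gamma_add_one h3.ne']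
  field_simp

lemma bsummable {l : ℝ} (hl : -1 < l) (w : ℝ) : Summable (fun m => bcoef l m * w ^ m) := by
  by_cases hw : w = 0
  · apply summable_of_ne_finset_zero (s := {0})
    intro m hm
    have : m ≠ 0 := by simpa using hm
    simp [hw, this]
  apply summable_of_ratio_test_tendsto_lt_one (l := 0) one_pos
  · exact Filter.Eventually.of_forall fun m => mul_ne_zero (bcoef_ne hl m) (pow_ne_zero _ hw)
  have key : ∀ m : ℕ, ‖bcoef l (m+1) * w ^ (m+1)‖ / ‖bcoef l m * w ^ m‖
      = |w| * ((1 / ((m:ℝ) + 1)) * (1 / ((m:ℝ) + (l + 1)))) := by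
    intro m
    have h3 : (0:ℝ) < (m:ℝ) + (l + 1) := by have : (0:ℝ) ≤ m := m.cast_nonneg; linarith
    have h4 : (0:ℝ) < (m:ℝ) + 1 := by positivity
    have e1 : bcoef l (m+1) = - bcoef (l+1) m / ((m:ℝ)+1) := by
      rw [← bcoef_succ hl]; field_simp
    have e2 := bcoef_up hl m
    have h5 : bcoef (l+1) m ≠ 0 := bcoef_ne (by linarith) m
    rw [← norm_div, ← e2, e1]
    have : (-bcoef (l + 1) m / ((m:ℝ) + 1) * w ^ (m + 1) / (((m:ℝ) + l + 1) * bcoef (l + 1) m * w ^ m))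
       = - (w * ((1 / ((m:ℝ) + 1)) * (1 / ((m:ℝ) + (l + 1))))) := by
      have : (m:ℝ) + l + 1 ≠ 0 := by linarith
      rw [← add_assoc]
      field_simp
      ring
    rw [this, norm_neg, norm_mul, Real.norm_eq_abs, Real.norm_eq_abs, abs_of_pos (a := 1 / ((m:ℝ) + 1) * _)]
    positivity
  simp_rw [key]
  have t1 : Filter.Tendsto (fun m : ℕ => 1 / ((m:ℝ) + 1)) Filter.atTop (nhds 0) :=
    tendsto_one_div_add_atTop_nhds_zero_nat
  have t2 : Filter.Tendsto (fun m : ℕ => 1 / ((m:ℝ) + (l+1))) Filter.atTop (nhds 0) := by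
    simp_rw [one_div]
    exact tendsto_inv_atTop_zero.comp
      (Filter.tendsto_atTop_add_const_right _ _ tendsto_natCast_atTop_atTop)
  simpa using (t1.mul t2).const_mul |w|

lemma bg_hasDerivAt {l : ℝ} (hl : -1 < l) (w : ℝ) :
    HasDerivAt (bg l) (- bg (l + 1) w) w := by
  set R := |w| + 1
  have hR : 0 < R := by positivity
  let g' : ℕ → ℝ → ℝ := fun m y => bcoef l m * (m * y ^ (m - 1))
  have hs : Summable (fun m => ‖bcoef (l+1) m * R ^ m‖) := (bsummable (by linarith) R).norm
  have e : ∀ (m : ℕ) y, g' (m+1) y = - (bcoef (l+1) m * y ^ m) := by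
    intro m y
    simp only [g']
    rw [← neg_mul, ← bcoef_succ hl]; push_cast; ring
  have H := hasDerivAt_tsum_of_isPreconnected (𝕜 := ℝ) (g := fun m y => bcoef l m * y ^ m) (g' := g')
    (u := fun m => ‖g' m R‖) (t := Metric.ball 0 R) (y₀ := 0) (y := w) ?_ Metric.isOpen_ball
    (convex_ball _ _).isPreconnected ?_ ?_ (by simpa using hR) (bsummable hl 0) (by simp [R])
  · have h2 : ∑' m, g' m w = - bg (l+1) w := by
      rw [Summable.tsum_eq_zero_add]
      · simp_rw [e]
        simp [g', tsum_neg, bg]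
      · rw [← summable_nat_add_iff 1]
        simp_rw [e]
        exact (bsummable (by linarith) w).neg
    rw [h2] at H
    exact H
  · rw [← summable_nat_add_iff 1]
    simp_rw [e, norm_neg]
    exact hs
  · intro m y _
    exact (hasDerivAt_pow m y).const_mul _
  · intro m y hy
    have hy : |y| < R := by simpa using hy
    simp only [g', norm_mul, norm_pow, Real.norm_eq_abs]
    rw [abs_of_pos hR]
    gcongr

lemma bg_rec {l : ℝ} (hl : -1 < l) (w : ℝ) :
    (l + 1) * bg (l + 1) w - w * bg (l + 2) w = bg l w := by
  have s1 := bsummable (l := l+1) (by linarith) w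
  have s2 := bsummable (l := l+2) (by linarith) w
  have s0 := bsummable hl w
  have e2 : ∀ m : ℕ, bcoef (l+2) m = - (((m:ℝ)+1) * bcoef (l+1) (m+1)) := by
    intro m; rw [bcoef_succ (by linarith)]; ring_nf
  have s3 : Summable (fun m : ℕ => (m:ℝ) * bcoef (l+1) m * w ^ m) := by
    rw [← summable_nat_add_iff 1]
    have := (s2.mul_left w).neg
    refine this.congr fun m => ?_
    rw [e2]; push_cast; ring
  have h3 : ∑' m : ℕ, (m:ℝ) * bcoef (l+1) m * w ^ m = - (w * bg (l+2) w) := by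
    rw [Summable.tsum_eq_zero_add s3, bg, ← tsum_mul_left, ← tsum_neg]
    simp only [Nat.cast_zero, zero_mul, zero_add]
    congr 1; ext m
    rw [e2]; push_cast; ring
  rw [sub_eq_add_neg, ← h3, bg, ← tsum_mul_left, ← Summable.tsum_add (s1.mul_left _) s3, bg]
  congr 1; ext m
  rw [← bcoef_up hl]; ring

lemma bg_zero (l : ℝ) : bg l 0 = 1 / Real.Gamma (l + 1) := by
  rw [bg, tsum_eq_single 0]
  · simp [bcoef]
  · intro m hm; simp [hm]

lemma bg_zero_ne {l : ℝ} (hl : -1 < l) : bg l 0 ≠ 0 := by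
  rw [bg_zero]
  have := Real.Gamma_pos_of_pos (s := l + 1) (by linarith)
  positivity

lemma bg_bound {l : ℝ} (hl : -(1/2) ≤ l) {w : ℝ} (hw : 0 ≤ w) : |bg l w| ≤ |bg l 0| := by
  let E : ℝ → ℝ := fun w => bg l w ^ 2 + w * bg (l+1) w ^ 2
  have hd : ∀ w, HasDerivAt E (-(2 * l + 1) * bg (l+1) w ^ 2) w := by
    intro w
    have h0 := bg_hasDerivAt (l := l) (by linarith) w
    have h1 := bg_hasDerivAt (l := l+1) (by linarith) w
    have := (h0.pow 2).add ((hasDerivAt_id w).mul (h1.pow 2))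
    refine this.congr_deriv ?_
    have r := bg_rec (l := l) (by linarith) w
    rw [show l + 1 + 1 = l + 2 by ring]
    simp only [id]
    push_cast
    have r' : w * bg (l+2) w = (l + 1) * bg (l + 1) w - bg l w := by linarith
    simp only [Pi.pow_apply]
    linear_combination (-2 * bg (l+1) w) * r'
  have hanti : AntitoneOn E (Set.Ici 0) := by
    apply antitoneOn_of_deriv_nonpos (convex_Ici 0)
    · exact fun x _ => (hd x).continuousAt.continuousWithinAt
    · exact fun x _ => (hd x).differentiableAt.differentiableWithinAt
    · intro x _
      rw [(hd x).deriv]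
      nlinarith [sq_nonneg (bg (l+1) x)]
  have := hanti (Set.mem_Ici.2 le_rfl) (Set.mem_Ici.2 hw) hw
  simp only [E, zero_mul, add_zero] at this
  apply sq_le_sq.1
  nlinarith [mul_nonneg hw (sq_nonneg (bg (l+1) w))]

lemma besselJ_eq (l : ℝ) {z : ℝ} (hz : z ≠ 0) :
    besselJ l z = (z / 2) ^ l * bg l (z ^ 2 / 4) := by
  rw [besselJ, bg, ← tsum_mul_left]
  congr 1; ext m
  have := Real.rpow_add_natCast (x := z/2) (by positivity) l (2 * m)
  push_cast at this
  rw [add_comm (2 * (m:ℝ)) l, this, bcoef, pow_mul]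
  ring

lemma rpow_mul_left_pos {x : ℝ} (hx : 0 < x) (s r : ℝ) : (x * s) ^ r = x ^ r * s ^ r := by
  rcases lt_trichotomy s 0 with h | h | h
  · rw [Real.rpow_def_of_neg (mul_neg_of_pos_of_neg hx h), Real.rpow_def_of_neg h,
      Real.rpow_def_of_pos hx, Real.log_mul hx.ne' h.ne, add_mul, Real.exp_add]
    ring
  · subst h
    by_cases hr : r = 0
    · simp [hr]
    · simp [Real.zero_rpow hr]
  · exact Real.mul_rpow hx.le h.le

lemma mv_helper {f f' : ℝ → ℂ} {C a b : ℝ} (ha : 0 < a) (hab : a ≤ b) (hb : b < 1)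
    (hf : ∀ x ∈ Set.Ioo (0:ℝ) 1, HasDerivAt f (f' x) x)
    (hC : ∀ x, a ≤ x → x ≤ b → ‖f' x‖ ≤ C) : ‖f b - f a‖ ≤ C * (b - a) := by
  refine norm_image_sub_le_of_norm_deriv_le_segment' (f' := f') (a := a) (b := b) ?_ ?_ b
    (Set.right_mem_Icc.2 hab)
  · intro x hx
    exact (hf x ⟨by linarith [hx.1], by linarith [hx.2]⟩).hasDerivWithinAt
  · intro x hx
    exact hC x hx.1 hx.2.le

lemma int0_helper {f f' : ℝ → ℂ} {C C' : ℝ} {k : ℕ} (hC0 : 0 ≤ C)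
    (hf : ∀ x ∈ Set.Ioo (0:ℝ) 1, HasDerivAt f (f' x) x)
    (hC : ∀ x ∈ Set.Ioo (0:ℝ) 1, ‖f' x‖ ≤ C * x ^ k)
    (h0 : ∀ x ∈ Set.Ioo (0:ℝ) 1, ‖f x‖ ≤ C' * x) :
    ∀ x ∈ Set.Ioo (0:ℝ) 1, ‖f x‖ ≤ C * x ^ (k + 1) := by
  intro x hx
  have h : ∀ᶠ a in nhdsWithin (0:ℝ) (Set.Ioi 0), ‖f x‖ ≤ C' * a + C * x ^ (k+1) := by
    filter_upwards [Ioo_mem_nhdsGT hx.1] with a ha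
    have h1 := mv_helper (C := C * x ^ k) ha.1 ha.2.le hx.2 hf (fun t h1 h2 =>
      (hC t ⟨by linarith [ha.1], by linarith [hx.2]⟩).trans
        (by have : 0 ≤ t := by linarith [ha.1]
            gcongr))
    have h2 := h0 a ⟨ha.1, by linarith [ha.2, hx.2]⟩
    have h3 : ‖f x‖ ≤ ‖f a‖ + ‖f x - f a‖ := by
      calc ‖f x‖ = ‖f a + (f x - f a)‖ := by congr 1; ring
        _ ≤ _ := norm_add_le _ _
    have h4 : C * x ^ k * (x - a) ≤ C * x ^ (k+1) := by
      rw [pow_succ, ← mul_assoc]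
      have : 0 ≤ C * x ^ k := mul_nonneg hC0 (pow_nonneg hx.1.le _)
      nlinarith [ha.1]
    linarith
  have ht : Filter.Tendsto (fun a : ℝ => C' * a + C * x ^ (k+1)) (nhdsWithin (0:ℝ) (Set.Ioi 0))
      (nhds (C' * 0 + C * x ^ (k+1))) :=
    Filter.Tendsto.mono_left (Continuous.tendsto (by fun_prop) 0) nhdsWithin_le_nhds
  have := ge_of_tendsto ht h
  simpa using this

lemma limit0_helper {f f' : ℝ → ℂ} {C : ℝ} (hC0 : 0 ≤ C)
    (hf : ∀ x ∈ Set.Ioo (0:ℝ) 1, HasDerivAt f (f' x) x)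
    (hC : ∀ x ∈ Set.Ioo (0:ℝ) 1, ‖f' x‖ ≤ C) :
    ∃ L : ℂ, ∀ x ∈ Set.Ioo (0:ℝ) 1, ‖f x - L‖ ≤ C * x := by
  have hlip : ∀ a ∈ Set.Ioo (0:ℝ) 1, ∀ b ∈ Set.Ioo (0:ℝ) 1, ‖f b - f a‖ ≤ C * |b - a| := by
    intro a ha b hb
    rcases le_total a b with h | h
    · rw [abs_of_nonneg (by linarith)]
      exact mv_helper ha.1 h hb.2 hf fun x h1 h2 => hC x ⟨by linarith [ha.1], by linarith [hb.2]⟩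
    · rw [abs_sub_comm, abs_of_nonneg (by linarith), norm_sub_rev]
      exact mv_helper hb.1 h ha.2 hf fun x h1 h2 => hC x ⟨by linarith [hb.1], by linarith [ha.2]⟩
  let u : ℕ → ℝ := fun n => 1 / ((n:ℝ) + 1) / 2
  have hu : ∀ n, u n ∈ Set.Ioo (0:ℝ) 1 := by
    intro n
    refine ⟨by positivity, ?_⟩
    have : 1 / ((n:ℝ) + 1) ≤ 1 := by
      rw [div_le_one (by positivity)]; have : (0:ℝ) ≤ n := n.cast_nonneg
      linarith
    simp only [u]; linarith
  have hu0 : Filter.Tendsto u Filter.atTop (nhds 0) := by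
    simpa [u] using (tendsto_one_div_add_atTop_nhds_zero_nat (𝕜 := ℝ)).div_const 2
  have hc : CauchySeq (fun n => f (u n)) := by
    have hcu := hu0.cauchySeq
    rw [Metric.cauchySeq_iff] at hcu ⊢
    intro ε hε
    obtain ⟨N, hN⟩ := hcu (ε / (C + 1)) (by positivity)
    refine ⟨N, fun m hm n hn => ?_⟩
    have h1 := hN m hm n hn
    rw [Real.dist_eq, lt_div_iff₀ (by positivity)] at h1
    rw [dist_eq_norm]
    have := hlip _ (hu n) _ (hu m)
    nlinarith [abs_nonneg (u m - u n)]
  obtain ⟨L, hL⟩ := cauchySeq_tendsto_of_complete hc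
  refine ⟨L, fun x hx => ?_⟩
  have t1 : Filter.Tendsto (fun n => ‖f x - f (u n)‖) Filter.atTop (nhds ‖f x - L‖) :=
    (hL.const_sub _).norm
  have t2 : Filter.Tendsto (fun n => C * |x - u n|) Filter.atTop (nhds (C * |x - 0|)) :=
    (hu0.const_sub _).abs.const_mul _
  have := le_of_tendsto_of_tendsto' t1 t2 (fun n => hlip _ (hu n) _ hx)
  rwa [sub_zero, abs_of_pos hx.1] at this

lemma dichotomy (N : ℕ) : ∀ f : ℕ → ℝ → ℂ,
    (∀ j, ∀ x ∈ Set.Ioo (0:ℝ) 1, HasDerivAt (f j) (f (j+1) x) x) →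
    (∀ j, ∃ C : ℝ, ∀ x ∈ Set.Ioo (0:ℝ) 1, ‖f j x‖ ≤ C) →
    ∃ C : ℝ, 0 ≤ C ∧
    ((∀ x ∈ Set.Ioo (0:ℝ) 1, ‖f 0 x‖ ≤ C * x ^ N ∧ ‖x * f 1 x‖ ≤ C * x ^ N) ∨
     ∃ (n : ℕ) (c : ℂ), c ≠ 0 ∧ ∀ x ∈ Set.Ioo (0:ℝ) 1,
        ‖f 0 x - c * x ^ n‖ ≤ C * x ^ (n+1) ∧ ‖x * f 1 x - n * c * x ^ n‖ ≤ C * x ^ (n+1)) := by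
  induction N with
  | zero =>
    intro f hf hb
    obtain ⟨C0, h0⟩ := hb 0
    obtain ⟨C1, h1⟩ := hb 1
    refine ⟨max |C0| |C1|, by positivity, Or.inl fun x hx => ⟨?_, ?_⟩⟩
    · simpa using Or.inl ((h0 x hx).trans (le_abs_self _))
    · have h2 : |x| * ‖f 1 x‖ ≤ ‖f 1 x‖ := by
        rw [abs_of_pos hx.1]; nlinarith [norm_nonneg (f 1 x), hx.2]
      simpa using Or.inr ((h2.trans (h1 x hx)).trans (le_abs_self _))
  | succ N ih =>
    intro f hf hb
    obtain ⟨C1, h1⟩ := hb 1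
    have h1' : ∀ x ∈ Set.Ioo (0:ℝ) 1, ‖f 1 x‖ ≤ |C1| := fun x hx => (h1 x hx).trans (le_abs_self _)
    obtain ⟨L, hL⟩ := limit0_helper (abs_nonneg C1) (hf 0) h1'
    by_cases hL0 : L = 0
    · subst hL0
      simp only [sub_zero] at hL
      obtain ⟨C, hC0, h | ⟨n, c, hc, h⟩⟩ := ih (fun j => f (j+1)) (fun j => hf (j+1)) (fun j => hb (j+1))
      · refine ⟨C, hC0, Or.inl fun x hx => ⟨?_, ?_⟩⟩
        · exact int0_helper hC0 (hf 0) (fun x hx => (h x hx).1) hL x hx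
        · have := (h x hx).1
          rw [norm_mul, Complex.norm_real, Real.norm_eq_abs, abs_of_pos hx.1, pow_succ]
          have := mul_le_mul_of_nonneg_left this hx.1.le
          simp only [zero_add] at this
          linarith
      · have hn : ((n:ℂ) + 1) ≠ 0 := by exact_mod_cast Nat.succ_ne_zero n
        refine ⟨C, hC0, Or.inr ⟨n+1, c / (n+1), div_ne_zero hc hn, fun x hx => ⟨?_, ?_⟩⟩⟩
        · have hd : ∀ x ∈ Set.Ioo (0:ℝ) 1, HasDerivAt (fun x : ℝ => f 0 x - c / (n+1) * (x:ℂ) ^ (n+1))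
              (f 1 x - c * (x:ℂ) ^ n) x := by
            intro x hx
            have := ((hasDerivAt_pow (n+1) (x:ℂ)).comp_ofReal).const_mul (c / (n+1))
            refine ((hf 0 x hx).sub this).congr_deriv ?_
            simp; field_simp
          refine int0_helper (C' := |C1| + ‖c / (n+1)‖) (f := fun x : ℝ => f 0 x - c / (n+1) * (x:ℂ) ^ (n+1)) hC0 hd
            (fun x hx => (h x hx).1) (fun x hx => ?_) x hx
          refine (norm_sub_le _ _).trans ?_
          rw [norm_mul, norm_pow, Complex.norm_real, Real.norm_eq_abs, abs_of_pos hx.1, add_mul]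
          have : x ^ (n+1) ≤ x := by
            rw [pow_succ]
            nlinarith [pow_le_one₀ (n := n) hx.1.le hx.2.le, hx.1]
          have := hL x hx
          gcongr
        · have := (h x hx).1
          have e : (x:ℂ) * f 1 x - ((n+1 : ℕ):ℂ) * (c / (n+1)) * (x:ℂ) ^ (n+1) = x * (f 1 x - c * (x:ℂ)^n) := by
            push_cast; field_simp; ring
          rw [e, norm_mul, Complex.norm_real, Real.norm_eq_abs, abs_of_pos hx.1, pow_succ x (n+1)]
          have := mul_le_mul_of_nonneg_left this hx.1.le
          simp only [zero_add] at this
          linarith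
    · refine ⟨|C1|, abs_nonneg _, Or.inr ⟨0, L, hL0, fun x hx => ⟨by simpa using hL x hx, ?_⟩⟩⟩
      have := h1' x hx
      simp only [Nat.cast_zero, zero_mul, sub_zero, norm_mul, Complex.norm_real, Real.norm_eq_abs,
        abs_of_pos hx.1]
      have := mul_le_mul_of_nonneg_left this hx.1.le
      simp; linarith

lemma int_lemma {a : ℝ} {N : ℕ} {u h : ℝ → ℂ} {U C : ℝ} (hN : -1 < a + N)
    (hu : ContinuousOn u (Set.Ioi 0)) (hU : ∀ x, 0 < x → ‖u x‖ ≤ U)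
    (hh : ContinuousOn h (Set.Ioi 0)) (hC : ∀ x ∈ Set.Ioo (0:ℝ) 1, ‖h x‖ ≤ C * x ^ N)
    (hd : ∀ k : ℕ, ∃ C : ℝ, ∀ x : ℝ, 1 ≤ x → x ^ k * ‖h x‖ ≤ C) :
    IntegrableOn (fun x : ℝ => ((x ^ a : ℝ) : ℂ) * (u x * h x)) (Set.Ioi 0) := by
  have hU0 : 0 ≤ U := (norm_nonneg _).trans (hU 1 one_pos)
  have hcont : ContinuousOn (fun x : ℝ => ((x ^ a : ℝ) : ℂ) * (u x * h x)) (Set.Ioi 0) := by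
    refine ContinuousOn.mul ?_ (hu.mul hh)
    refine Complex.continuous_ofReal.comp_continuousOn ?_
    exact continuousOn_id.rpow_const fun x hx => Or.inl (ne_of_gt hx)
  have hset : Set.Ioi (0:ℝ) = Set.Ioo 0 1 ∪ Set.Ici 1 := (Set.Ioo_union_Ici_eq_Ioi one_pos).symm
  have hnorm : ∀ x : ℝ, 0 < x → ‖((x ^ a : ℝ) : ℂ) * (u x * h x)‖ ≤ U * (x ^ a * ‖h x‖) := by
    intro x hx
    rw [norm_mul, norm_mul, Complex.norm_real, Real.norm_eq_abs, abs_of_pos (Real.rpow_pos_of_pos hx a)]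
    have h1 := hU x hx
    have h2 : 0 ≤ x ^ a * ‖h x‖ := by positivity
    nlinarith
  rw [hset]
  apply IntegrableOn.union
  · have hi : IntegrableOn (fun x : ℝ => U * C * x ^ (a + N)) (Set.Ioo 0 1) :=
      ((intervalIntegral.integrableOn_Ioo_rpow_iff one_pos).2 hN).const_mul _
    refine Integrable.mono' hi ((hcont.mono fun x hx => hx.1).aestronglyMeasurable measurableSet_Ioo) ?_
    refine ae_restrict_of_forall_mem measurableSet_Ioo fun x hx => (hnorm x hx.1).trans ?_
    rw [Real.rpow_add_natCast hx.1.ne', mul_assoc]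
    have h1 := mul_le_mul_of_nonneg_left (hC x hx) (Real.rpow_nonneg hx.1.le a)
    exact mul_le_mul_of_nonneg_left (by linarith) hU0
  · obtain ⟨k, hk⟩ := exists_nat_ge (a + 2)
    obtain ⟨D, hD⟩ := hd k
    have hD0 : 0 ≤ D := le_trans (by positivity) (hD 1 le_rfl)
    have hi : IntegrableOn (fun x : ℝ => U * (D * x ^ (-2:ℝ))) (Set.Ici 1) := by
      rw [integrableOn_Ici_iff_integrableOn_Ioi]
      exact ((integrableOn_Ioi_rpow_of_lt (by norm_num) one_pos).const_mul _).const_mul _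
    refine Integrable.mono' hi ((hcont.mono fun x (hx : 1 ≤ x) => lt_of_lt_of_le one_pos hx).aestronglyMeasurable
      measurableSet_Ici) ?_
    refine ae_restrict_of_forall_mem measurableSet_Ici fun x (hx : 1 ≤ x) => ?_
    have hx0 : 0 < x := by linarith
    refine (hnorm x hx0).trans (mul_le_mul_of_nonneg_left ?_ hU0)
    have h1 := hD x hx
    have h2 : x ^ a ≤ x ^ (-2:ℝ) * x ^ k := by
      rw [← Real.rpow_add_natCast hx0.ne']
      exact Real.rpow_le_rpow_of_exponent_le hx (by linarith)
    calc x ^ a * ‖h x‖ ≤ x ^ (-2:ℝ) * x ^ k * ‖h x‖ := by gcongr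
      _ = x ^ (-2:ℝ) * (x ^ k * ‖h x‖) := by ring
      _ ≤ x ^ (-2:ℝ) * D := by gcongr
      _ = _ := mul_comm _ _

lemma bdry_lemma {a : ℝ} {N : ℕ} {u h : ℝ → ℂ} {U C : ℝ} (hN : -1 < a + N)
    (hU : ∀ x, 0 < x → ‖u x‖ ≤ U)
    (hC : ∀ x ∈ Set.Ioo (0:ℝ) 1, ‖h x‖ ≤ C * x ^ N)
    (hd : ∀ k : ℕ, ∃ C : ℝ, ∀ x : ℝ, 1 ≤ x → x ^ k * ‖h x‖ ≤ C) :
    Filter.Tendsto (fun x : ℝ => ((x ^ (a+1) : ℝ) : ℂ) * (u x * h x)) (nhdsWithin 0 (Set.Ioi 0)) (nhds 0)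
    ∧ Filter.Tendsto (fun x : ℝ => ((x ^ (a+1) : ℝ) : ℂ) * (u x * h x)) Filter.atTop (nhds 0) := by
  have hU0 : 0 ≤ U := (norm_nonneg _).trans (hU 1 one_pos)
  have hnorm : ∀ x : ℝ, 0 < x → ‖((x ^ (a+1) : ℝ) : ℂ) * (u x * h x)‖ ≤ U * (x ^ (a+1) * ‖h x‖) := by
    intro x hx
    rw [norm_mul, norm_mul, Complex.norm_real, Real.norm_eq_abs, abs_of_pos (Real.rpow_pos_of_pos hx _)]
    have h1 := hU x hx
    have h2 : 0 ≤ x ^ (a+1) * ‖h x‖ := by positivity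
    nlinarith
  constructor
  · have hi : Filter.Tendsto (fun x : ℝ => U * C * x ^ (a + 1 + N)) (nhdsWithin 0 (Set.Ioi 0)) (nhds 0) := by
      have h1 : Filter.Tendsto (fun x : ℝ => x ^ (a + 1 + N)) (nhds 0) (nhds 0) := by
        have := (Real.continuousAt_rpow_const 0 (a + 1 + N) (Or.inr (by linarith))).tendsto
        rwa [Real.zero_rpow (by linarith)] at this
      simpa using (h1.mono_left nhdsWithin_le_nhds).const_mul (U * C)
    refine squeeze_zero_norm' ?_ hi
    filter_upwards [Ioo_mem_nhdsGT one_pos] with x hx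
    refine (hnorm x hx.1).trans ?_
    rw [Real.rpow_add_natCast hx.1.ne', mul_assoc]
    have h1 := mul_le_mul_of_nonneg_left (hC x hx) (Real.rpow_nonneg hx.1.le (a+1))
    exact mul_le_mul_of_nonneg_left (by linarith) hU0
  · obtain ⟨k, hk⟩ := exists_nat_ge (a + 2)
    obtain ⟨D, hD⟩ := hd k
    have hD0 : 0 ≤ D := le_trans (by positivity) (hD 1 le_rfl)
    have hi : Filter.Tendsto (fun x : ℝ => U * (D * x ^ (-1:ℝ))) Filter.atTop (nhds 0) := by
      simpa using ((tendsto_rpow_neg_atTop (y := 1) one_pos).const_mul D).const_mul U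
    refine squeeze_zero_norm' ?_ hi
    filter_upwards [Filter.eventually_ge_atTop 1] with x hx
    have hx0 : 0 < x := by linarith
    refine (hnorm x hx0).trans (mul_le_mul_of_nonneg_left ?_ hU0)
    have h1 := hD x hx
    have h2 : x ^ (a+1) ≤ x ^ (-1:ℝ) * x ^ k := by
      rw [← Real.rpow_add_natCast hx0.ne']
      exact Real.rpow_le_rpow_of_exponent_le hx (by linarith)
    calc x ^ (a+1) * ‖h x‖ ≤ x ^ (-1:ℝ) * x ^ k * ‖h x‖ := by gcongr
      _ = x ^ (-1:ℝ) * (x ^ k * ‖h x‖) := by ring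
      _ ≤ x ^ (-1:ℝ) * D := by gcongr
      _ = _ := mul_comm _ _

lemma ni_lemma {a : ℝ} {n : ℕ} {u h : ℝ → ℂ} {C : ℝ} {k u0 : ℂ} (hn : a + n ≤ -1)
    (hu : Filter.Tendsto u (nhdsWithin 0 (Set.Ioi 0)) (nhds u0)) (hu0 : u0 ≠ 0) (hk : k ≠ 0)
    (hC : ∀ x ∈ Set.Ioo (0:ℝ) 1, ‖h x - k * x ^ n‖ ≤ C * x ^ (n+1)) :
    ¬ IntegrableOn (fun x : ℝ => ((x ^ a : ℝ) : ℂ) * (u x * h x)) (Set.Ioi 0) := by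
  intro hint
  have hu0' : 0 < ‖u0‖ := norm_pos_iff.2 hu0
  have hk' : 0 < ‖k‖ := norm_pos_iff.2 hk
  have e1 : ∀ᶠ x in nhdsWithin (0:ℝ) (Set.Ioi 0), ‖u0‖ / 2 < ‖u x‖ :=
    hu.norm.eventually_const_lt (by linarith)
  have e2 : ∀ᶠ x in nhdsWithin (0:ℝ) (Set.Ioi 0), C * x < ‖k‖ / 2 := by
    have : Filter.Tendsto (fun x : ℝ => C * x) (nhdsWithin (0:ℝ) (Set.Ioi 0)) (nhds (C * 0)) :=
      Filter.Tendsto.mono_left (Continuous.tendsto (by fun_prop) 0) nhdsWithin_le_nhds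
    exact this.eventually_lt_const (by simpa using hk')
  obtain ⟨δ, hδ, hs⟩ := mem_nhdsGT_iff_exists_Ioo_subset.1 (e1.and (e2.and (Ioo_mem_nhdsGT one_pos)))
  have hδ : 0 < δ := hδ
  have hi := (hint.mono_set (Set.Ioo_subset_Ioi_self : Set.Ioo 0 δ ⊆ _)).norm.const_mul (‖u0‖ / 2 * (‖k‖ / 2))⁻¹
  have : IntegrableOn (fun x : ℝ => x ^ (a + n)) (Set.Ioo 0 δ) := by
    refine Integrable.mono' hi ?_ ?_
    · refine ContinuousOn.aestronglyMeasurable ?_ measurableSet_Ioo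
      exact continuousOn_id.rpow_const fun x hx => Or.inl (ne_of_gt hx.1)
    · refine ae_restrict_of_forall_mem measurableSet_Ioo fun x hx => ?_
      obtain ⟨h1, h2, h3⟩ := hs hx
      have hx0 := hx.1
      rw [Real.norm_eq_abs, abs_of_pos (Real.rpow_pos_of_pos hx.1 _), Real.rpow_add_natCast hx.1.ne']
      simp only [norm_mul, Complex.norm_real, Real.norm_eq_abs, abs_of_pos (Real.rpow_pos_of_pos hx.1 _)]
      rw [inv_mul_eq_div, le_div_iff₀ (by positivity)]
      have h4 : ‖k‖ / 2 * x ^ n ≤ ‖h x‖ := by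
        have h5 := hC x h3
        have h6 : ‖k * (x:ℂ) ^ n‖ ≤ ‖h x‖ + ‖h x - k * (x:ℂ)^n‖ := by
          have := norm_sub_le (h x) (h x - k * (x:ℂ)^n)
          rwa [sub_sub_cancel] at this
        rw [norm_mul, norm_pow, Complex.norm_real, Real.norm_eq_abs, abs_of_pos hx0] at h6
        have h7 : C * x ^ (n+1) ≤ ‖k‖ / 2 * x ^ n := by
          rw [pow_succ]
          have := pow_pos hx0 n
          nlinarith
        linarith
      calc x ^ a * x ^ n * (‖u0‖ / 2 * (‖k‖ / 2)) = x ^ a * (‖u0‖ / 2 * (‖k‖ / 2 * x ^ n)) := by ring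
        _ ≤ x ^ a * (‖u x‖ * ‖h x‖) := by gcongr
  rw [intervalIntegral.integrableOn_Ioo_rpow_iff hδ] at this
  linarith

/-- The chirp factor. -/
noncomputable def chirp (κ : ℝ) (x : ℝ) : ℂ := Complex.exp (-(I / 2) * (x : ℂ) ^ 2 * (κ : ℂ))

lemma chirp_norm (κ x : ℝ) : ‖chirp κ x‖ = 1 := by
  rw [chirp, show -(I / 2) * (x : ℂ) ^ 2 * (κ : ℂ) = ((-(x ^ 2 * κ / 2) : ℝ) : ℂ) * I by
    push_cast; ring]
  exact Complex.norm_exp_ofReal_mul_I _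

lemma chirp_hasDerivAt (κ x : ℝ) : HasDerivAt (chirp κ) (-(I * κ * x) * chirp κ x) x := by
  have h : HasDerivAt (fun z : ℂ => Complex.exp (-(I / 2) * z ^ 2 * (κ : ℂ)))
      (Complex.exp (-(I / 2) * (x:ℂ) ^ 2 * (κ : ℂ)) * (-(I / 2) * (2 * (x:ℂ)) * κ)) (x:ℂ) := by
    have := (((hasDerivAt_pow 2 (x:ℂ)).const_mul (-(I/2))).mul_const (κ:ℂ)).cexp
    simpa using this
  refine h.comp_ofReal.congr_deriv ?_
  rw [chirp]; ring

lemma chirp_cont (κ : ℝ) : Continuous (chirp κ) :=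
  continuous_iff_continuousAt.2 fun x => (chirp_hasDerivAt κ x).continuousAt

lemma F_hasDerivAt {κ p x : ℝ} (hx : 0 < x) {ψ : ℝ → ℂ} {ψ' : ℂ} (h : HasDerivAt ψ ψ' x) :
    HasDerivAt (fun t : ℝ => chirp κ t * ((t ^ p : ℝ) : ℂ) * ψ t)
      (((x ^ (p - 1) : ℝ) : ℂ) * (chirp κ x * (p * ψ x + x * ψ' - I * κ * x ^ 2 * ψ x))) x := by
  have h1 : HasDerivAt (fun t : ℝ => ((t ^ p : ℝ) : ℂ)) ((p * x ^ (p - 1) : ℝ) : ℂ) x :=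
    (Real.hasDerivAt_rpow_const (Or.inl hx.ne')).ofReal_comp
  refine (((chirp_hasDerivAt κ x).mul h1).mul h).congr_deriv ?_
  have e : x ^ p = x ^ (p - 1) * x := by
    rw [Real.rpow_sub_one hx.ne']; field_simp
  simp only [Pi.mul_apply]
  rw [e]
  push_cast
  ring

lemma G_hasDerivAt {l c x : ℝ} (hl : -1 < l) (hx : 0 < x) :
    HasDerivAt (fun t : ℝ => ((t ^ (2 * l + 2) * bg (l+1) (c * t ^ 2) : ℝ) : ℂ))
      ((2 * x ^ (2 * l + 1) * bg l (c * x ^ 2) : ℝ) : ℂ) x := by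
  apply HasDerivAt.ofReal_comp
  have h1 : HasDerivAt (fun t : ℝ => t ^ (2 * l + 2)) ((2 * l + 2) * x ^ (2 * l + 2 - 1)) x :=
    Real.hasDerivAt_rpow_const (Or.inl hx.ne')
  have h2 : HasDerivAt (fun t : ℝ => c * t ^ 2) (c * (2 * x)) x := by
    simpa using (hasDerivAt_pow 2 x).const_mul c
  have h3 := (bg_hasDerivAt (l := l+1) (by linarith) (c * x ^ 2)).comp x h2
  refine (h1.mul h3).congr_deriv ?_
  have r := bg_rec hl (c * x ^ 2)
  have e : x ^ (2 * l + 2) = x ^ (2 * l + 1) * x := by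
    rw [show 2 * l + 2 = 2 * l + 1 + 1 by ring, Real.rpow_add_one hx.ne']
  rw [e, show 2 * l + 2 - 1 = 2 * l + 1 by ring, show l + 1 + 1 = l + 2 by ring, ← r]
  simp only [Function.comp]
  ring

lemma bgx_cont {l : ℝ} (hl : -1 < l) (c : ℝ) : Continuous (fun x : ℝ => bg l (c * x ^ 2)) := by
  have : Continuous (bg l) := continuous_iff_continuousAt.2 fun x => (bg_hasDerivAt hl x).continuousAt
  exact this.comp (by fun_prop)

lemma core {l p c κ : ℝ} (hl : -(1/2) ≤ l) (hc : 0 ≤ c) {f : ℕ → ℝ → ℂ}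
    (hf : ∀ j, ∀ x, 0 < x → HasDerivAt (f j) (f (j+1) x) x)
    (hdec : ∀ k n : ℕ, ∃ C : ℝ, ∀ x : ℝ, 0 < x → x ^ k * ‖f n x‖ ≤ C) :
    ∫ x in Set.Ioi (0:ℝ), ((x ^ (2 * l + 1 + p) : ℝ) : ℂ) *
      (((bg (l+1) (c * x ^ 2) : ℝ) : ℂ) * chirp κ x * (p * f 0 x + x * f 1 x - I * κ * x ^ 2 * f 0 x))
    = - ∫ x in Set.Ioi (0:ℝ), ((x ^ (2 * l + 1 + p) : ℝ) : ℂ) *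
      ((2 * (bg l (c * x ^ 2) : ℝ) : ℂ) * chirp κ x * f 0 x) := by
  set a := 2 * l + 1 + p with ha
  have hl1 : -1 < l := by linarith
  have hl2 : -1 < l + 1 := by linarith
  let u1 : ℝ → ℂ := fun x => ((bg (l+1) (c * x ^ 2) : ℝ) : ℂ) * chirp κ x
  let u2 : ℝ → ℂ := fun x => (2 * (bg l (c * x ^ 2) : ℝ) : ℂ) * chirp κ x
  let h2 : ℝ → ℂ := fun x => p * f 0 x + x * f 1 x - I * κ * x ^ 2 * f 0 x
  have hu1 : Continuous u1 := (Complex.continuous_ofReal.comp (bgx_cont hl2 c)).mul (chirp_cont κ)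
  have hu2 : Continuous u2 :=
    (continuous_const.mul (Complex.continuous_ofReal.comp (bgx_cont hl1 c))).mul (chirp_cont κ)
  have hU1 : ∀ x, 0 < x → ‖u1 x‖ ≤ |bg (l+1) 0| := by
    intro x hx
    simp only [u1, norm_mul, chirp_norm, Complex.norm_real, Real.norm_eq_abs, mul_one]
    exact bg_bound (by linarith) (by positivity)
  have hU2 : ∀ x, 0 < x → ‖u2 x‖ ≤ 2 * |bg l 0| := by
    intro x hx
    simp only [u2, norm_mul, chirp_norm, Complex.norm_real, Real.norm_eq_abs, mul_one]
    have := bg_bound hl (w := c * x ^ 2) (by positivity)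
    simpa using this
  have hfc : ∀ j, ContinuousOn (f j) (Set.Ioi 0) := fun j x hx =>
    (hf j x hx).continuousAt.continuousWithinAt
  have hh2 : ContinuousOn h2 (Set.Ioi 0) := by
    have := hfc 0
    have := hfc 1
    simp only [h2]
    have hx : ContinuousOn (fun x : ℝ => (x:ℂ)) (Set.Ioi 0) := Complex.continuous_ofReal.continuousOn
    fun_prop
  have hd0 : ∀ k : ℕ, ∃ C : ℝ, ∀ x : ℝ, 1 ≤ x → x ^ k * ‖f 0 x‖ ≤ C := fun k => by
    obtain ⟨C, hC⟩ := hdec k 0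
    exact ⟨C, fun x hx => hC x (by linarith)⟩
  have hn2 : ∀ x, 0 < x → ‖h2 x‖ ≤ |p| * ‖f 0 x‖ + ‖x * f 1 x‖ + |κ| * x ^ 2 * ‖f 0 x‖ := by
    intro x hx
    refine (norm_sub_le _ _).trans (add_le_add ((norm_add_le _ _).trans_eq ?_) (le_of_eq ?_))
    · simp
    · simp
  have hd2 : ∀ k : ℕ, ∃ C : ℝ, ∀ x : ℝ, 1 ≤ x → x ^ k * ‖h2 x‖ ≤ C := fun k => by
    obtain ⟨C0, h0⟩ := hdec k 0
    obtain ⟨C1, h1⟩ := hdec (k+1) 1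
    obtain ⟨C2, h2'⟩ := hdec (k+2) 0
    refine ⟨|p| * C0 + C1 + |κ| * C2, fun x hx => ?_⟩
    have hx0 : 0 < x := by linarith
    have e := mul_le_mul_of_nonneg_left (hn2 x hx0) (pow_nonneg hx0.le k)
    rw [norm_mul, Complex.norm_real, Real.norm_eq_abs, abs_of_pos hx0] at e
    have i0 := mul_le_mul_of_nonneg_left (h0 x hx0) (abs_nonneg p)
    have i1 := h1 x hx0
    have i2 := mul_le_mul_of_nonneg_left (h2' x hx0) (abs_nonneg κ)
    refine e.trans ?_
    rw [pow_succ] at i1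
    rw [pow_add] at i2
    linarith
  -- the good case
  have good : ∀ (N : ℕ) (C : ℝ), 0 ≤ C → -1 < a + N →
      (∀ x ∈ Set.Ioo (0:ℝ) 1, ‖f 0 x‖ ≤ C * x ^ N ∧ ‖x * f 1 x‖ ≤ C * x ^ N) →
      ∫ x in Set.Ioi (0:ℝ), ((x ^ a : ℝ) : ℂ) * (u1 x * h2 x)
      = - ∫ x in Set.Ioi (0:ℝ), ((x ^ a : ℝ) : ℂ) * (u2 x * f 0 x) := by
    intro N C hC0 hN hC
    have hC2 : ∀ x ∈ Set.Ioo (0:ℝ) 1, ‖h2 x‖ ≤ (|p| * C + C + |κ| * C) * x ^ N := by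
      intro x hx
      obtain ⟨i0, i1⟩ := hC x hx
      have hx2 : x ^ 2 ≤ 1 := pow_le_one₀ hx.1.le hx.2.le
      refine (hn2 x hx.1).trans ?_
      calc _ ≤ |p| * (C * x ^ N) + C * x ^ N + |κ| * 1 * (C * x ^ N) := by gcongr
        _ = _ := by ring
    have I1 := int_lemma hN hu1.continuousOn hU1 hh2 hC2 hd2
    have I2 := int_lemma hN hu2.continuousOn hU2 (hfc 0) (fun x hx => (hC x hx).1) hd0
    obtain ⟨b0, b1⟩ := bdry_lemma hN hU1 (fun x hx => (hC x hx).1) hd0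
    let G : ℝ → ℂ := fun t : ℝ => ((t ^ (2 * l + 2) * bg (l+1) (c * t ^ 2) : ℝ) : ℂ)
    let G' : ℝ → ℂ := fun x => ((2 * x ^ (2 * l + 1) * bg l (c * x ^ 2) : ℝ) : ℂ)
    let F : ℝ → ℂ := fun t : ℝ => chirp κ t * ((t ^ p : ℝ) : ℂ) * f 0 t
    let F' : ℝ → ℂ := fun x => ((x ^ (p - 1) : ℝ) : ℂ) *
      (chirp κ x * (p * f 0 x + x * f 1 x - I * κ * x ^ 2 * f 0 x))
    have q1 : ∀ x ∈ Set.Ioi (0:ℝ), ((x ^ a : ℝ) : ℂ) * (u1 x * h2 x) = (G * F') x := by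
      intro x hx
      have : x ^ a = x ^ (2 * l + 2) * x ^ (p - 1) := by
        rw [← Real.rpow_add hx]; congr 1; rw [ha]; ring
      rw [this]
      simp only [G, F', u1, h2, Pi.mul_apply]
      push_cast; ring
    have q2 : ∀ x ∈ Set.Ioi (0:ℝ), ((x ^ a : ℝ) : ℂ) * (u2 x * f 0 x) = (G' * F) x := by
      intro x hx
      have : x ^ a = x ^ (2 * l + 1) * x ^ p := by
        rw [← Real.rpow_add hx]
      rw [this]
      simp only [G', F, u2, Pi.mul_apply]
      push_cast; ring
    have q3 : ∀ x ∈ Set.Ioi (0:ℝ), ((x ^ (a+1) : ℝ) : ℂ) * (u1 x * f 0 x) = (G * F) x := by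
      intro x hx
      have : x ^ (a+1) = x ^ (2 * l + 2) * x ^ p := by
        rw [← Real.rpow_add hx]; congr 1; rw [ha]; ring
      rw [this]
      simp only [G, F, u1, Pi.mul_apply]
      push_cast; ring
    have parts := integral_Ioi_mul_deriv_eq_deriv_mul (a := (0:ℝ)) (u := G) (v := F) (u' := G') (v' := F')
      (a' := 0) (b' := 0)
      (fun x hx => G_hasDerivAt hl1 hx) (fun x hx => F_hasDerivAt hx (hf 0 x hx))
      (I1.congr_fun q1 measurableSet_Ioi) (I2.congr_fun q2 measurableSet_Ioi)
      (b0.congr' (by filter_upwards [self_mem_nhdsWithin] with x hx using q3 x hx))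
      (b1.congr' (by filter_upwards [Filter.eventually_gt_atTop 0] with x hx using q3 x hx))
    rw [setIntegral_congr_fun measurableSet_Ioi q1, setIntegral_congr_fun measurableSet_Ioi q2]
    simpa using parts
  show ∫ x in Set.Ioi (0:ℝ), ((x ^ a : ℝ) : ℂ) * (u1 x * h2 x)
      = - ∫ x in Set.Ioi (0:ℝ), ((x ^ a : ℝ) : ℂ) * (u2 x * f 0 x)
  obtain ⟨N, hN⟩ := exists_nat_gt (-1 - a)
  obtain ⟨C, hC0, h | ⟨n, k, hk, h⟩⟩ := dichotomy N f (fun j x hx => hf j x hx.1) (fun j => by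
    obtain ⟨C, hC⟩ := hdec 0 j
    exact ⟨C, fun x hx => by simpa using hC x hx.1⟩)
  · exact good N C hC0 (by linarith) h
  by_cases hn : -1 < a + n
  · refine good n (C + (n + 1) * ‖k‖) (by positivity) hn fun x hx => ?_
    obtain ⟨i0, i1⟩ := h x hx
    have hx0 := hx.1
    have hp : x ^ (n+1) ≤ x ^ n := pow_le_pow_of_le_one hx.1.le hx.2.le (Nat.le_succ n)
    have hkn : ‖k * (x:ℂ) ^ n‖ = ‖k‖ * x ^ n := by
      rw [norm_mul, norm_pow, Complex.norm_real, Real.norm_eq_abs, abs_of_pos hx.1]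
    have hxn : 0 ≤ ‖k‖ * x ^ n := by positivity
    have hCp := mul_le_mul_of_nonneg_left hp hC0
    have hnn : 0 ≤ (n:ℝ) * (‖k‖ * x ^ n) := by positivity
    constructor
    · have := norm_add_le (f 0 x - k * (x:ℂ) ^ n) (k * (x:ℂ) ^ n)
      rw [sub_add_cancel, hkn] at this
      nlinarith
    · have := norm_add_le (x * f 1 x - n * k * (x:ℂ) ^ n) (n * k * (x:ℂ) ^ n)
      rw [sub_add_cancel, mul_assoc (n:ℂ) k, norm_mul (n:ℂ), hkn, Complex.norm_natCast] at this
      rw [mul_assoc (n:ℂ) k] at i1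
      nlinarith
  · push Not at hn
    have hchirp0 : chirp κ 0 = 1 := by simp [chirp]
    have t1 : u1 0 ≠ 0 := by
      simp only [u1, hchirp0]
      simpa using bg_zero_ne hl2
    have t2 : u2 0 ≠ 0 := by
      simp only [u2, hchirp0]
      simpa using bg_zero_ne hl1
    have N2 := ni_lemma hn ((hu2.tendsto 0).mono_left nhdsWithin_le_nhds) t2 hk (fun x hx => (h x hx).1)
    have hpn : (p:ℂ) + n ≠ 0 := by
      have : p + n ≠ 0 := by rw [ha] at hn; linarith
      exact_mod_cast this
    have N1 := ni_lemma (h := h2) (C := |p| * C + C + |κ| * (‖k‖ + C)) (k := (p + n) * k) hn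
      ((hu1.tendsto 0).mono_left nhdsWithin_le_nhds) t1 (mul_ne_zero hpn hk) (fun x hx => by
        obtain ⟨i0, i1⟩ := h x hx
        have hx0 := hx.1
        have hkn : ‖k * (x:ℂ) ^ n‖ = ‖k‖ * x ^ n := by
          rw [norm_mul, norm_pow, Complex.norm_real, Real.norm_eq_abs, abs_of_pos hx.1]
        have e : h2 x - (p + n) * k * (x:ℂ) ^ n = p * (f 0 x - k * (x:ℂ) ^ n)
          + (x * f 1 x - n * k * (x:ℂ) ^ n) - I * κ * x ^ 2 * f 0 x := by
          simp only [h2]; ring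
        have e3 : x ^ 2 * ‖f 0 x‖ ≤ (‖k‖ + C) * x ^ (n+1) := by
          have := norm_add_le (f 0 x - k * (x:ℂ) ^ n) (k * (x:ℂ) ^ n)
          rw [sub_add_cancel, hkn] at this
          have hp : x ^ (n+1) ≤ x ^ n := pow_le_pow_of_le_one hx.1.le hx.2.le (Nat.le_succ n)
          have hCp := mul_le_mul_of_nonneg_left hp hC0
          have h9 : ‖f 0 x‖ ≤ (‖k‖ + C) * x ^ n := by linarith
          calc x ^ 2 * ‖f 0 x‖ ≤ x * ((‖k‖ + C) * x ^ n) := by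
                gcongr
                nlinarith [hx.2]
            _ = _ := by ring
        rw [e]
        refine (norm_sub_le _ _).trans ?_
        have := norm_add_le (p * (f 0 x - k * (x:ℂ) ^ n)) (x * f 1 x - n * k * (x:ℂ) ^ n)
        rw [norm_mul, Complex.norm_real, Real.norm_eq_abs] at this
        have e4 : ‖I * κ * (x:ℂ) ^ 2 * f 0 x‖ = |κ| * (x ^ 2 * ‖f 0 x‖) := by
          simp; ring
        rw [e4]
        have j0 := mul_le_mul_of_nonneg_left i0 (abs_nonneg p)
        have j3 := mul_le_mul_of_nonneg_left e3 (abs_nonneg κ)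
        linarith)
    rw [integral_undef N1, integral_undef N2, neg_zero]

theorem stmt_11 (ν μ θ : ℝ) (hν : -(1 / 2 : ℝ) ≤ ν) (hθ : Real.sin θ ≠ 0)
    (ψ : ℝ → ℂ) (hψ : ContDiffOn ℝ (⊤ : ℕ∞) ψ (Set.Ioi 0))
    (hdec : ∀ k n : ℕ, ∃ C : ℝ, ∀ x : ℝ, 0 < x →
      x ^ k * ‖iteratedDerivWithin n ψ (Set.Ioi 0) x‖ ≤ C)
    (q : ℕ) :
    ∀ y : ℝ, 0 < y →
      fracHankelInv (ν + q + 1) μ θ (fun x => (x : ℂ) ^ q * fracMneg ν μ θ ψ x) y =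
        (y : ℂ) * ((Real.sin θ)⁻¹ : ℂ) * Complex.exp (-I * ((θ - Real.pi / 2 : ℝ) : ℂ)) *
          fracHankelInv (ν + q) μ θ (fun x => (x : ℂ) ^ q * ψ x) y := by
  intro y hy
  set s : ℝ := y * (Real.sin θ)⁻¹ with hs
  have hs0 : s ≠ 0 := mul_ne_zero hy.ne' (inv_ne_zero hθ)
  set l : ℝ := ν + q with hl
  have hl' : -(1/2) ≤ l := by have : (0:ℝ) ≤ q := q.cast_nonneg
                              rw [hl]; linarith
  set c : ℝ := s ^ 2 / 4 with hc
  set κ : ℝ := Real.cot θ with hκ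
  set p : ℝ := μ - ν with hp
  let f : ℕ → ℝ → ℂ := fun j => iteratedDerivWithin j ψ (Set.Ioi 0)
  have hf0 : f 0 = ψ := iteratedDerivWithin_zero
  have hf : ∀ j, ∀ x, 0 < x → HasDerivAt (f j) (f (j+1) x) x := by
    intro j x hx
    have h1 : DifferentiableOn ℝ (f j) (Set.Ioi 0) :=
      hψ.differentiableOn_iteratedDerivWithin (by exact_mod_cast WithTop.coe_lt_top j) (uniqueDiffOn_Ioi 0)
    have h2 := (h1 x hx).hasDerivWithinAt
    have h3 : f (j+1) x = derivWithin (f j) (Set.Ioi 0) x := by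
      simp only [f]; rw [iteratedDerivWithin_succ]
    rw [h3]
    exact h2.hasDerivAt (Ioi_mem_nhds hx)
  have hcore := core (l := l) (p := p) (c := c) (κ := κ) hl' (by positivity) hf hdec
  rw [hf0] at hcore
  set K0 : ℂ := Complex.exp (-I * ((1 + l : ℝ) : ℂ) * ((θ - Real.pi / 2 : ℝ) : ℂ)) /
        ((Real.sin θ ^ (1 + μ) : ℝ) : ℂ) with hK0
  set E : ℂ := Complex.exp (-I * ((θ - Real.pi / 2 : ℝ) : ℂ)) with hE
  have hK1 : Complex.exp (-I * ((1 + (l + 1) : ℝ) : ℂ) * ((θ - Real.pi / 2 : ℝ) : ℂ)) /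
        ((Real.sin θ ^ (1 + μ) : ℝ) : ℂ) = K0 * E := by
    rw [hK0, hE, div_mul_eq_mul_div, ← Complex.exp_add]
    congr 2; push_cast; ring
  have hexp : ∀ x : ℝ, Complex.exp (-(I / 2) * ((x : ℂ) ^ 2 + (y : ℂ) ^ 2) * (κ : ℂ))
      = chirp κ x * chirp κ y := by
    intro x
    rw [chirp, chirp, ← Complex.exp_add]; congr 1; ring
  have hJ : ∀ m x : ℝ, 0 < x → besselJ m (x * s) = x ^ m * (s / 2) ^ m * bg m (c * x ^ 2) := by
    intro m x hx
    rw [besselJ_eq m (mul_ne_zero hx.ne' hs0), mul_div_assoc, rpow_mul_left_pos hx]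
    congr 2; rw [hc]; ring
  have hsl : (s / 2) ^ (l + 1) = (s / 2) ^ l * (s / 2) := by
    rw [Real.rpow_add_one (by positivity)]
  have hM : ∀ x : ℝ, 0 < x → chirp κ x * fracMneg ν μ θ ψ x =
      -(((x ^ (ν - μ) * x ^ (p - 1) : ℝ) : ℂ) *
        (chirp κ x * (p * ψ x + x * f 1 x - I * κ * x ^ 2 * ψ x))) := by
    intro x hx
    have hψ' : HasDerivAt ψ (f 1 x) x := by simpa only [hf0, zero_add] using hf 0 x hx
    have hd : deriv (fun t : ℝ =>
      Complex.exp (-(I / 2) * (t : ℂ) ^ 2 * (Real.cot θ : ℂ)) *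
        (t : ℂ) ^ ((μ - ν : ℝ) : ℂ) * ψ t) x = ((x ^ (p - 1) : ℝ) : ℂ) *
          (chirp κ x * (p * ψ x + x * f 1 x - I * κ * x ^ 2 * ψ x)) := by
      refine HasDerivAt.deriv ?_
      refine (F_hasDerivAt (κ := κ) (p := p) hx hψ').congr_of_eventuallyEq ?_
      filter_upwards [Ioi_mem_nhds hx] with t ht
      rw [Complex.ofReal_cpow (le_of_lt ht)]
      rfl
    have he : chirp κ x * Complex.exp ((I / 2) * (x : ℂ) ^ 2 * (κ : ℂ)) = 1 := by
      rw [chirp, ← Complex.exp_add, ← Complex.exp_zero]; congr 1; ring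
    rw [fracMneg, hd, ← Complex.ofReal_cpow hx.le, ← hκ]
    push_cast
    linear_combination (-(((x ^ (ν - μ) : ℝ) : ℂ) * (((x ^ (p - 1) : ℝ) : ℂ) *
          (chirp κ x * (p * ψ x + x * f 1 x - I * κ * x ^ 2 * ψ x))))) * he
  have hL : fracHankelInv (l + 1) μ θ (fun x => (x : ℂ) ^ q * fracMneg ν μ θ ψ x) y =
      (-(K0 * E * chirp κ y * ((s ^ (-μ) : ℝ) : ℂ) * (((s / 2) ^ l : ℝ) : ℂ) * (s / 2))) *
      ∫ x in Set.Ioi (0:ℝ), ((x ^ (2 * l + 1 + p) : ℝ) : ℂ) *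
        (((bg (l+1) (c * x ^ 2) : ℝ) : ℂ) * chirp κ x *
          (p * ψ x + x * f 1 x - I * κ * x ^ 2 * ψ x)) := by
    rw [fracHankelInv, ← integral_const_mul]
    refine setIntegral_congr_fun measurableSet_Ioi fun x hx => ?_
    have hx : 0 < x := hx
    have hpow : x ^ (2 * l + 1 + p) =
        x ^ (-μ) * x ^ (l + 1) * x ^ (1 + 2 * μ) * x ^ q * (x ^ (ν - μ) * x ^ (p - 1)) := by
      rw [← Real.rpow_natCast, ← Real.rpow_add hx, ← Real.rpow_add hx, ← Real.rpow_add hx,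
        ← Real.rpow_add hx, ← Real.rpow_add hx]
      congr 1; rw [hl, hp]; ring
    have hm := hM x hx
    rw [hK1, ← hκ, hexp, mul_assoc x y, ← hs, rpow_mul_left_pos hx, hJ _ x hx, hsl, hpow]
    push_cast at hm ⊢
    linear_combination (K0 * E * chirp κ y * ((x ^ (-μ) : ℝ) : ℂ) * ((s ^ (-μ) : ℝ) : ℂ) *
      ((x ^ (l+1) : ℝ) : ℂ) * (((s / 2) ^ l : ℝ) : ℂ) * (s / 2) * ((bg (l+1) (c * x ^ 2) : ℝ) : ℂ) *
      ((x ^ (1 + 2 * μ) : ℝ) : ℂ) * (x:ℂ) ^ q) * hm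
  have hR : fracHankelInv l μ θ (fun x => (x : ℂ) ^ q * ψ x) y =
      (K0 * chirp κ y * ((s ^ (-μ) : ℝ) : ℂ) * (((s / 2) ^ l : ℝ) : ℂ) / 2) *
      ∫ x in Set.Ioi (0:ℝ), ((x ^ (2 * l + 1 + p) : ℝ) : ℂ) *
        ((2 * (bg l (c * x ^ 2) : ℝ) : ℂ) * chirp κ x * ψ x) := by
    rw [fracHankelInv, ← integral_const_mul]
    refine setIntegral_congr_fun measurableSet_Ioi fun x hx => ?_
    have hx : 0 < x := hx
    have hpow : x ^ (2 * l + 1 + p) =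
        x ^ (-μ) * x ^ l * x ^ (1 + 2 * μ) * x ^ q := by
      rw [← Real.rpow_natCast, ← Real.rpow_add hx, ← Real.rpow_add hx, ← Real.rpow_add hx]
      congr 1; rw [hl, hp]; ring
    rw [← hK0, ← hκ, hexp, mul_assoc x y, ← hs, rpow_mul_left_pos hx, hJ _ x hx, hpow]
    push_cast
    ring
  rw [hL, hR, hcore]
  have hsc : (y : ℂ) * ((Real.sin θ : ℝ) : ℂ)⁻¹ = (s : ℂ) := by rw [hs]; push_cast; rfl
  rw [hsc]
  ring
end
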